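/- Under Condition (★), for every integer h ≥ 2, ∑_{m ∈ S_h(x)} ω(m)² = (κ/ζ_M(h))·x·(log log x)² + (κ(2ℭ₁ + 1)/ζ_M(h))·x·log log x + (κ·ℭ₂/ζ_M(h))·x + O_h(x·log log x/log x) as x → ∞, where the implied constant depends only on h and on the data P, N, κ, θ. -/

import Mathlib

open Filter Topology Asymptotics
open scoped Classical

noncomputable section

/-- The norm on the free abelian monoid `P →₀ ℕ`, extended multiplicatively
from the norm `N` on the prime elements. -/
def Nm {P : Type*} (N : P → ℕ) (m : P →₀ ℕ) : ℕ :=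
  m.prod fun p k => N p ^ k

/-- The number of distinct prime elements generating `m`. -/
def omegaM {P : Type*} (m : P →₀ ℕ) : ℕ := m.support.card

/-- `m` is `h`-free: every multiplicity is at most `h - 1`. -/
def HFree {P : Type*} (h : ℕ) (m : P →₀ ℕ) : Prop := ∀ p, m p ≤ h - 1

/-- `m` is `h`-full: every nonzero multiplicity is at least `h`. -/
def HFull {P : Type*} (h : ℕ) (m : P →₀ ℕ) : Prop := ∀ p, m p = 0 ∨ h ≤ m p

/-- Condition (★): `#{m : N(m) ≤ x} = κ·x + O(x^θ)` with `κ > 0`, `0 ≤ θ < 1`. -/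
def StarCond {P : Type*} (N : P → ℕ) (κ θ : ℝ) : Prop :=
  0 < κ ∧ 0 ≤ θ ∧ θ < 1 ∧
    (fun x : ℝ => (({m : P →₀ ℕ | (Nm N m : ℝ) ≤ x}.ncard : ℝ) - κ * x))
      =O[atTop] fun x : ℝ => x ^ θ

/-- The generalized zeta function `ζ_M(s) = ∑_m N(m)^{-s}`. -/
def zetaM {P : Type*} (N : P → ℕ) (s : ℝ) : ℝ :=
  ∑' m : P →₀ ℕ, 1 / (Nm N m : ℝ) ^ s

/-- The constant `γ_h`. -/
def gammah {P : Type*} (N : P → ℕ) (h : ℕ) : ℝ :=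
  ∏' p : P, (1 + ((N p : ℝ) - (N p : ℝ) ^ (1 / (h : ℝ))) /
    ((N p : ℝ) ^ 2 * ((N p : ℝ) ^ (1 / (h : ℝ)) - 1)))

/-- `A` is the Mertens constant `𝔄` of the prime system:
`𝔄 = lim (∑_{N(p) ≤ x} 1/N(p) − log log x)`. -/
def IsMertens {P : Type*} (N : P → ℕ) (A : ℝ) : Prop :=
  Tendsto (fun x : ℝ =>
      (∑ᶠ p ∈ {p : P | (N p : ℝ) ≤ x}, 1 / (N p : ℝ)) - Real.log (Real.log x))
    atTop (𝓝 A)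

/-- The constant `𝔅 = -π²/6`. -/
def Bconst : ℝ := -(Real.pi ^ 2) / 6

/-- The constant `ℭ₁`, given the Mertens constant `A`. -/
def C1const {P : Type*} (N : P → ℕ) (h : ℕ) (A : ℝ) : ℝ :=
  A - ∑' p : P, ((N p : ℝ) - 1) / ((N p : ℝ) * ((N p : ℝ) ^ h - 1))

/-- The constant `ℭ₂`, given the Mertens constant `A`. -/
def C2const {P : Type*} (N : P → ℕ) (h : ℕ) (A : ℝ) : ℝ :=
  C1const N h A ^ 2 + C1const N h A + Bconst -
    ∑' p : P, (((N p : ℝ) ^ (h - 1) - 1) / ((N p : ℝ) ^ h - 1)) ^ 2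

/-- The convergent series `𝔏_h(r)`. -/
def LhSum {P : Type*} (N : P → ℕ) (h : ℕ) (r : ℝ) : ℝ :=
  ∑' p : P, 1 / ((N p : ℝ) ^ (r / (h : ℝ) - 1) *
    ((N p : ℝ) - (N p : ℝ) ^ (1 - 1 / (h : ℝ)) + 1))

/-- The constant `𝔇₁`, given the Mertens constant `A`. -/
def D1const {P : Type*} (N : P → ℕ) (h : ℕ) (A : ℝ) : ℝ :=
  A - Real.log (h : ℝ) + LhSum N h ((h : ℝ) + 1) - LhSum N h (2 * (h : ℝ))

/-- The constant `𝔇₂`, given the Mertens constant `A`. -/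
def D2const {P : Type*} (N : P → ℕ) (h : ℕ) (A : ℝ) : ℝ :=
  D1const N h A ^ 2 + D1const N h A + Bconst -
    ∑' p : P, (1 / ((N p : ℝ) - (N p : ℝ) ^ (1 - 1 / (h : ℝ)) + 1)) ^ 2

/-- The error term `R_{S_h}(x)` for `h`-free counts. -/
def RSfree (h : ℕ) (θ : ℝ) (x : ℝ) : ℝ :=
  if 1 / (h : ℝ) < θ then x ^ θ
  else if 1 / (h : ℝ) = θ then x ^ (1 / (h : ℝ)) * Real.log x
  else x ^ (1 / (h : ℝ))

/-- The error term `R_{N_h}(x)` for `h`-full counts. -/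
def RNfull (h : ℕ) (θ : ℝ) (x : ℝ) : ℝ :=
  if (h : ℝ) / ((h : ℝ) + 1) < θ then x ^ (θ / (h : ℝ))
  else if ∃ i : ℕ, 1 ≤ i ∧ i ≤ h - 1 ∧ θ = (h : ℝ) / ((h : ℝ) + (i : ℝ)) then
    x ^ (1 / ((h : ℝ) + 1)) * Real.log x
  else x ^ (1 / ((h : ℝ) + 1))

section

lemma abel_gen (c : ℕ → ℝ) (C : ℝ)
    (hc : ∀ t : ℝ, 1 ≤ t → |∑ k ∈ Finset.Icc 0 ⌊t⌋₊, c k - Real.log t| ≤ C)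
    (a b : ℝ) (ha : 1 ≤ a) (hab : a ≤ b) (f f' : ℝ → ℝ)
    (hf : ∀ t ∈ Set.Icc a b, HasDerivAt f (f' t) t) (hf' : ContinuousOn f' (Set.Icc a b)) :
    |∑ k ∈ Finset.Ioc ⌊a⌋₊ ⌊b⌋₊, f k * c k - ∫ t in a..b, f t / t|
      ≤ C * (|f a| + |f b| + ∫ t in a..b, |f' t|) := by
  have hC : 0 ≤ C := (abs_nonneg _).trans (hc 1 le_rfl)
  have hder : ∀ t ∈ Set.Icc a b, deriv f t = f' t := fun t ht => (hf t ht).deriv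
  have hint' : MeasureTheory.IntegrableOn f' (Set.Icc a b) := hf'.integrableOn_Icc
  have hint : MeasureTheory.IntegrableOn (deriv f) (Set.Icc a b) :=
    hint'.congr_fun (fun t ht => (hder t ht).symm) measurableSet_Icc
  rw [sum_mul_eq_sub_sub_integral_mul c (by linarith) hab
    (fun t ht => (hf t ht).differentiableAt) hint]
  set S : ℝ → ℝ := fun t => ∑ k ∈ Finset.Icc 0 ⌊t⌋₊, c k with hS
  have hI1 : MeasureTheory.IntegrableOn (fun t => f' t * S t) (Set.Icc a b) :=
    integrableOn_mul_sum_Icc c (by linarith) hint'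
  have e1 : ∫ t in Set.Ioc a b, deriv f t * ∑ k ∈ Finset.Icc 0 ⌊t⌋₊, c k
      = ∫ t in a..b, f' t * S t := by
    rw [intervalIntegral.integral_of_le hab]
    apply MeasureTheory.setIntegral_congr_fun measurableSet_Ioc
    intro t ht
    simp only [hS]
    rw [hder t ⟨ht.1.le, ht.2⟩]
  have hu : Set.uIcc a b = Set.Icc a b := Set.uIcc_of_le hab
  have hpos : ∀ t ∈ Set.Icc a b, 0 < t := fun t ht => by linarith [ht.1]
  have hlogc : ContinuousOn Real.log (Set.Icc a b) :=
    Real.continuousOn_log.mono (fun t ht => (hpos t ht).ne')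
  have e2 : ∫ t in a..b, f t / t = f b * Real.log b - f a * Real.log a
      - ∫ t in a..b, f' t * Real.log t := by
    have := intervalIntegral.integral_mul_deriv_eq_deriv_mul (a := a) (b := b) (u := f)
      (v := Real.log) (u' := f') (v' := fun t => t⁻¹)
      (fun t ht => hf t (hu ▸ ht)) (fun t ht => Real.hasDerivAt_log (hpos t (hu ▸ ht)).ne')
      (by apply ContinuousOn.intervalIntegrable; rwa [hu])
      (by apply ContinuousOn.intervalIntegrable; rw [hu]
          exact continuousOn_inv₀.mono (fun t ht => (hpos t ht).ne'))
    simpa [div_eq_mul_inv] using this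
  have i1 : IntervalIntegrable (fun t => f' t * S t) MeasureTheory.volume a b := by
    rw [intervalIntegrable_iff_integrableOn_Icc_of_le hab]; exact hI1
  have i2 : IntervalIntegrable (fun t => f' t * Real.log t) MeasureTheory.volume a b := by
    apply ContinuousOn.intervalIntegrable; rw [hu]; exact hf'.mul hlogc
  have i3 : IntervalIntegrable (fun t => C * |f' t|) MeasureTheory.volume a b := by
    apply ContinuousOn.intervalIntegrable; rw [hu]; exact continuousOn_const.mul hf'.abs
  have e3 : ∫ t in a..b, f' t * S t = (∫ t in a..b, f' t * Real.log t) +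
      ∫ t in a..b, f' t * (S t - Real.log t) := by
    rw [← intervalIntegral.integral_add i2 ((i1.sub i2).congr (by intro t _; simp; ring))]
    congr 1; ext t; ring
  have e4 : |∫ t in a..b, f' t * (S t - Real.log t)| ≤ C * ∫ t in a..b, |f' t| := by
    rw [← intervalIntegral.integral_const_mul]
    rw [← Real.norm_eq_abs]
    apply intervalIntegral.norm_integral_le_of_norm_le hab _ i3
    filter_upwards with t ht
    rw [norm_mul, Real.norm_eq_abs, Real.norm_eq_abs, mul_comm]
    exact mul_le_mul_of_nonneg_right (hc t (by linarith [ht.1])) (abs_nonneg _)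
  rw [e1, e2, e3]
  have ea := hc a ha
  have eb := hc b (ha.trans hab)
  have ea' : |f a * (S a - Real.log a)| ≤ C * |f a| := by
    rw [abs_mul, mul_comm]; exact mul_le_mul_of_nonneg_right ea (abs_nonneg _)
  have eb' : |f b * (S b - Real.log b)| ≤ C * |f b| := by
    rw [abs_mul, mul_comm]; exact mul_le_mul_of_nonneg_right eb (abs_nonneg _)
  rw [abs_le] at *
  constructor <;> nlinarith

lemma abel_mono (c : ℕ → ℝ) (C : ℝ)
    (hc : ∀ t : ℝ, 1 ≤ t → |∑ k ∈ Finset.Icc 0 ⌊t⌋₊, c k - Real.log t| ≤ C)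
    (a b : ℝ) (ha : 1 ≤ a) (hab : a ≤ b) (f f' : ℝ → ℝ)
    (hf : ∀ t ∈ Set.Icc a b, HasDerivAt f (f' t) t) (hf' : ContinuousOn f' (Set.Icc a b))
    (h0 : ∀ t ∈ Set.Icc a b, 0 ≤ f t) (h1 : ∀ t ∈ Set.Icc a b, 0 ≤ f' t) :
    |∑ k ∈ Finset.Ioc ⌊a⌋₊ ⌊b⌋₊, f k * c k - ∫ t in a..b, f t / t| ≤ 2 * C * f b := by
  have := abel_gen c C hc a b ha hab f f' hf hf'
  have hu : Set.uIcc a b = Set.Icc a b := Set.uIcc_of_le hab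
  have e : ∫ t in a..b, |f' t| = f b - f a := by
    rw [← intervalIntegral.integral_eq_sub_of_hasDerivAt (f := f) (f' := f')]
    · apply intervalIntegral.integral_congr
      intro t ht
      exact abs_of_nonneg (h1 t (hu ▸ ht))
    · intro t ht; exact hf t (hu ▸ ht)
    · apply ContinuousOn.intervalIntegrable; rwa [hu]
  rw [e, abs_of_nonneg (h0 a ⟨le_rfl, hab⟩), abs_of_nonneg (h0 b ⟨hab, le_rfl⟩)] at this
  linarith

lemma abel_anti (c : ℕ → ℝ) (C : ℝ)
    (hc : ∀ t : ℝ, 1 ≤ t → |∑ k ∈ Finset.Icc 0 ⌊t⌋₊, c k - Real.log t| ≤ C)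
    (a b : ℝ) (ha : 1 ≤ a) (hab : a ≤ b) (f f' : ℝ → ℝ)
    (hf : ∀ t ∈ Set.Icc a b, HasDerivAt f (f' t) t) (hf' : ContinuousOn f' (Set.Icc a b))
    (h0 : ∀ t ∈ Set.Icc a b, 0 ≤ f t) (h1 : ∀ t ∈ Set.Icc a b, f' t ≤ 0) :
    |∑ k ∈ Finset.Ioc ⌊a⌋₊ ⌊b⌋₊, f k * c k - ∫ t in a..b, f t / t| ≤ 2 * C * f a := by
  have := abel_gen c C hc a b ha hab f f' hf hf'
  have hu : Set.uIcc a b = Set.Icc a b := Set.uIcc_of_le hab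
  have e : ∫ t in a..b, |f' t| = - (f b - f a) := by
    rw [← intervalIntegral.integral_eq_sub_of_hasDerivAt (f := f) (f' := f'),
      ← intervalIntegral.integral_neg]
    · apply intervalIntegral.integral_congr
      intro t ht
      exact abs_of_nonpos (h1 t (hu ▸ ht))
    · intro t ht; exact hf t (hu ▸ ht)
    · apply ContinuousOn.intervalIntegrable; rwa [hu]
  rw [e, abs_of_nonneg (h0 a ⟨le_rfl, hab⟩), abs_of_nonneg (h0 b ⟨hab, le_rfl⟩)] at this
  linarith

/-- data package for prime weights -/
structure BW (b : ℕ → ℝ) (C c1 : ℝ) : Prop where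
  nn : ∀ n, 0 ≤ b n
  z0 : b 0 = 0
  z1 : b 1 = 0
  m1 : ∀ t : ℝ, 1 ≤ t → |∑ k ∈ Finset.Icc 0 ⌊t⌋₊, b k * Real.log k - Real.log t| ≤ C
  lim : Tendsto (fun x : ℝ => ∑ k ∈ Finset.Icc 0 ⌊x⌋₊, b k - Real.log (Real.log x)) atTop (𝓝 c1)

lemma BW.C_nonneg {b : ℕ → ℝ} {C c1 : ℝ} (H : BW b C c1) : 0 ≤ C :=
  (abs_nonneg _).trans (H.m1 1 le_rfl)

lemma sum_Icc_Ioc (g : ℕ → ℝ) (m n : ℕ) (h : m ≤ n) :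
    ∑ k ∈ Finset.Icc 0 n, g k = ∑ k ∈ Finset.Icc 0 m, g k + ∑ k ∈ Finset.Ioc m n, g k := by
  have := Finset.sum_Ioc_consecutive g (Nat.zero_le m) h
  have e : ∀ n, Finset.Icc 0 n = insert 0 (Finset.Ioc 0 n) := by
    intro n; ext k; simp
  rw [e n, e m, Finset.sum_insert (by simp), Finset.sum_insert (by simp), ← this]
  ring

lemma BW.sum_from_one {b : ℕ → ℝ} {C c1 : ℝ} (H : BW b C c1) (g : ℕ → ℝ) (n : ℕ) (hn : 1 ≤ n) :
    ∑ k ∈ Finset.Icc 0 n, b k * g k = ∑ k ∈ Finset.Ioc 1 n, b k * g k := by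
  rw [sum_Icc_Ioc _ 1 n hn]
  have : Finset.Icc 0 1 = {0, 1} := by decide
  rw [this]; simp [H.z0, H.z1]

lemma BW.mertens2 {b : ℕ → ℝ} {C c1 : ℝ} (H : BW b C c1) (x : ℝ) (hx : 1 < x) :
    |∑ k ∈ Finset.Icc 0 ⌊x⌋₊, b k - Real.log (Real.log x) - c1| ≤ 2 * C / Real.log x := by
  have key : ∀ y, x ≤ y → |(∑ k ∈ Finset.Icc 0 ⌊y⌋₊, b k - Real.log (Real.log y)) -
      (∑ k ∈ Finset.Icc 0 ⌊x⌋₊, b k - Real.log (Real.log x))| ≤ 2 * C / Real.log x := by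
    intro y hy
    have hl : ∀ t ∈ Set.Icc x y, 0 < Real.log t := fun t ht => Real.log_pos (by linarith [ht.1])
    have hp : ∀ t ∈ Set.Icc x y, 0 < t := fun t ht => by linarith [ht.1]
    have hu : Set.uIcc x y = Set.Icc x y := Set.uIcc_of_le hy
    have hder : ∀ t ∈ Set.Icc x y, HasDerivAt (fun t => (Real.log t)⁻¹)
        (-(t⁻¹) / (Real.log t)^2) t := by
      intro t ht
      exact (Real.hasDerivAt_log (hp t ht).ne').inv (hl t ht).ne'
    have hlogc : ContinuousOn Real.log (Set.Icc x y) :=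
      Real.continuousOn_log.mono (fun t ht => (hp t ht).ne')
    have hinv : ContinuousOn (fun t : ℝ => t⁻¹) (Set.Icc x y) :=
      continuousOn_inv₀.mono (fun t ht => (hp t ht).ne')
    have := abel_anti (fun k => b k * Real.log k) C H.m1 x y hx.le hy (fun t => (Real.log t)⁻¹)
      (fun t => -(t⁻¹) / (Real.log t)^2) hder
      (hinv.neg.div (hlogc.pow 2) (fun t ht => (pow_pos (hl t ht) 2).ne'))
      (fun t ht => (inv_pos.2 (hl t ht)).le)
      (fun t ht => by
        have := hl t ht
        have := hp t ht
        rw [neg_div]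
        have : 0 ≤ t⁻¹ / (Real.log t)^2 := by positivity
        linarith)
    have e1 : ∫ t in x..y, (Real.log t)⁻¹ / t = Real.log (Real.log y) - Real.log (Real.log x) := by
      apply intervalIntegral.integral_eq_sub_of_hasDerivAt (f := fun t => Real.log (Real.log t))
      · intro t ht
        rw [hu] at ht
        have := (Real.hasDerivAt_log (hp t ht).ne').log (hl t ht).ne'
        refine this.congr_deriv ?_
        field_simp
      · apply ContinuousOn.intervalIntegrable
        rw [hu]
        exact (hlogc.inv₀ (fun t ht => (hl t ht).ne')).div continuousOn_id
          (fun t ht => (hp t ht).ne')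
    have e2 : ∑ k ∈ Finset.Ioc ⌊x⌋₊ ⌊y⌋₊, (Real.log k)⁻¹ * (b k * Real.log k)
        = ∑ k ∈ Finset.Ioc ⌊x⌋₊ ⌊y⌋₊, b k := by
      apply Finset.sum_congr rfl
      intro k hk
      have hk1 := (Finset.mem_Ioc.1 hk).1
      have hk2 : 1 ≤ ⌊x⌋₊ := (Nat.one_le_floor_iff _).mpr hx.le
      have : 0 < Real.log k := Real.log_pos (by exact_mod_cast (by omega : 1 < k))
      field_simp
    rw [e1, e2] at this
    rw [sum_Icc_Ioc b ⌊x⌋₊ ⌊y⌋₊ (Nat.floor_le_floor hy)]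
    rw [div_eq_mul_inv]
    convert this using 2
    ring
  have ht : Tendsto (fun y => |(∑ k ∈ Finset.Icc 0 ⌊y⌋₊, b k - Real.log (Real.log y)) -
      (∑ k ∈ Finset.Icc 0 ⌊x⌋₊, b k - Real.log (Real.log x))|) atTop
      (𝓝 |c1 - (∑ k ∈ Finset.Icc 0 ⌊x⌋₊, b k - Real.log (Real.log x))|) :=
    (H.lim.sub_const _).abs
  have := le_of_tendsto ht (by filter_upwards [eventually_ge_atTop x] with y hy using key y hy)
  rw [abs_sub_comm] at this
  exact this

/-- monotone Abel starting at one -/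
lemma BW.mono {b : ℕ → ℝ} {C c1 : ℝ} (H : BW b C c1) (y : ℝ) (hy : 1 ≤ y) (f f' : ℝ → ℝ)
    (hf : ∀ t ∈ Set.Icc 1 y, HasDerivAt f (f' t) t) (hf' : ContinuousOn f' (Set.Icc 1 y))
    (h0 : ∀ t ∈ Set.Icc 1 y, 0 ≤ f t) (h1 : ∀ t ∈ Set.Icc 1 y, 0 ≤ f' t) :
    |∑ k ∈ Finset.Icc 0 ⌊y⌋₊, b k * (Real.log k * f k) - ∫ t in (1:ℝ)..y, f t / t|
      ≤ 2 * C * f y := by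
  have := abel_mono (fun k => b k * Real.log k) C H.m1 1 y le_rfl hy f f' hf hf' h0 h1
  rw [H.sum_from_one (fun k => Real.log k * f k) _ ((Nat.one_le_floor_iff _).mpr hy)]
  rw [Nat.floor_one] at this
  convert this using 4
  ring

lemma BW.pow {b : ℕ → ℝ} {C c1 : ℝ} (H : BW b C c1) (y : ℝ) (hy : 1 ≤ y) (k : ℕ) :
    |∑ n ∈ Finset.Icc 0 ⌊y⌋₊, b n * Real.log n ^ (k+1) - Real.log y ^ (k+1) / (k+1)|
      ≤ 2 * C * Real.log y ^ k := by
  have hp : ∀ t ∈ Set.Icc 1 y, (0:ℝ) < t := fun t ht => by linarith [ht.1]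
  have hl : ∀ t ∈ Set.Icc 1 y, 0 ≤ Real.log t := fun t ht => Real.log_nonneg ht.1
  have hu : Set.uIcc 1 y = Set.Icc 1 y := Set.uIcc_of_le hy
  have hlogc : ContinuousOn Real.log (Set.Icc 1 y) :=
    Real.continuousOn_log.mono (fun t ht => (hp t ht).ne')
  have hinv : ContinuousOn (fun t : ℝ => t⁻¹) (Set.Icc 1 y) :=
    continuousOn_inv₀.mono (fun t ht => (hp t ht).ne')
  have := H.mono y hy (fun t => Real.log t ^ k) (fun t => k * Real.log t ^ (k-1) * t⁻¹)
    (fun t ht => (Real.hasDerivAt_log (hp t ht).ne').pow k)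
    ((continuousOn_const.mul (hlogc.pow _)).mul hinv)
    (fun t ht => pow_nonneg (hl t ht) _)
    (fun t ht => by have := hl t ht; have := hp t ht; positivity)
  have e1 : ∫ t in (1:ℝ)..y, Real.log t ^ k / t = Real.log y ^ (k+1) / (k+1) := by
    have := intervalIntegral.integral_eq_sub_of_hasDerivAt (a := 1) (b := y)
      (f := fun t => Real.log t ^ (k+1) / (k+1)) (f' := fun t => Real.log t ^ k / t)
      (by
        intro t ht
        rw [hu] at ht
        have := ((Real.hasDerivAt_log (hp t ht).ne').pow (k+1)).div_const ((k:ℝ)+1)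
        refine this.congr_deriv ?_
        push_cast
        field_simp)
      (by
        apply ContinuousOn.intervalIntegrable
        rw [hu]
        exact (hlogc.pow _).div continuousOn_id (fun t ht => (hp t ht).ne'))
    rw [this]; simp
  rw [e1] at this
  convert this using 4
  ring

lemma BW.e1a {b : ℕ → ℝ} {C c1 : ℝ} (H : BW b C c1) (x : ℝ) (hx : 2 ≤ x) :
    |∑ n ∈ Finset.Icc 0 ⌊x/2⌋₊, b n * (Real.log n * (Real.log x - Real.log n)⁻¹)
      - (Real.log (Real.log x) - Real.log (Real.log 2))|
      ≤ 2 * C * (Real.log 2)⁻¹ := by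
  have hy : 1 ≤ x / 2 := by linarith
  have hp : ∀ t ∈ Set.Icc 1 (x/2), (0:ℝ) < t := fun t ht => by linarith [ht.1]
  have hl : ∀ t ∈ Set.Icc 1 (x/2), 0 < Real.log x - Real.log t := fun t ht => by
    have := Real.log_lt_log (hp t ht) (by linarith [ht.2] : t < x)
    linarith
  have hu : Set.uIcc 1 (x/2) = Set.Icc 1 (x/2) := Set.uIcc_of_le hy
  have hlogc : ContinuousOn Real.log (Set.Icc 1 (x/2)) :=
    Real.continuousOn_log.mono (fun t ht => (hp t ht).ne')
  have hinv : ContinuousOn (fun t : ℝ => t⁻¹) (Set.Icc 1 (x/2)) :=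
    continuousOn_inv₀.mono (fun t ht => (hp t ht).ne')
  have hsub : ContinuousOn (fun t => Real.log x - Real.log t) (Set.Icc 1 (x/2)) :=
    continuousOn_const.sub hlogc
  have := H.mono (x/2) hy (fun t => (Real.log x - Real.log t)⁻¹)
    (fun t => - (-(t⁻¹)) / (Real.log x - Real.log t)^2)
    (fun t ht => ((Real.hasDerivAt_log (hp t ht).ne').const_sub _).inv (hl t ht).ne')
    (hinv.neg.neg.div (hsub.pow 2) (fun t ht => (pow_pos (hl t ht) 2).ne'))
    (fun t ht => (inv_pos.2 (hl t ht)).le)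
    (fun t ht => by have := hl t ht; have := hp t ht; rw [neg_neg]; positivity)
  have hx2 : Real.log x - Real.log (x/2) = Real.log 2 := by
    rw [Real.log_div (by linarith) (by norm_num)]; ring
  have e1 : ∫ t in (1:ℝ)..(x/2), (Real.log x - Real.log t)⁻¹ / t
      = Real.log (Real.log x) - Real.log (Real.log 2) := by
    have := intervalIntegral.integral_eq_sub_of_hasDerivAt (a := 1) (b := x/2)
      (f := fun t => - Real.log (Real.log x - Real.log t))
      (f' := fun t => (Real.log x - Real.log t)⁻¹ / t)
      (by
        intro t ht
        rw [hu] at ht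
        have := (((Real.hasDerivAt_log (hp t ht).ne').const_sub (Real.log x)).log
          (hl t ht).ne').neg
        refine this.congr_deriv ?_
        have := hl t ht; have := hp t ht
        field_simp)
      (by
        apply ContinuousOn.intervalIntegrable
        rw [hu]
        exact (hsub.inv₀ (fun t ht => (hl t ht).ne')).div continuousOn_id
          (fun t ht => (hp t ht).ne'))
    rw [this, hx2]; simp; ring
  rw [e1, hx2] at this
  exact this

lemma BW.rp {b : ℕ → ℝ} {C c1 : ℝ} (H : BW b C c1) (σ : ℝ) (hσ : 0 < σ) (y : ℝ) (hy : 1 ≤ y) :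
    ∑ n ∈ Finset.Icc 0 ⌊y⌋₊, b n * (Real.log n * (n:ℝ) ^ σ) ≤ (1 / σ + 2 * C) * y ^ σ := by
  have hp : ∀ t ∈ Set.Icc 1 y, (0:ℝ) < t := fun t ht => by linarith [ht.1]
  have hu : Set.uIcc 1 y = Set.Icc 1 y := Set.uIcc_of_le hy
  have hc : ∀ s : ℝ, ContinuousOn (fun t : ℝ => t ^ s) (Set.Icc 1 y) := fun s t ht =>
    (Real.continuousAt_rpow_const t s (Or.inl (hp t ht).ne')).continuousWithinAt
  have := H.mono y hy (fun t => t ^ σ) (fun t => σ * t ^ (σ - 1))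
    (fun t ht => Real.hasDerivAt_rpow_const (Or.inl (hp t ht).ne'))
    (continuousOn_const.mul (hc _))
    (fun t ht => by have := hp t ht; positivity)
    (fun t ht => by have := hp t ht; positivity)
  have e1 : ∫ t in (1:ℝ)..y, t ^ σ / t = y ^ σ / σ - 1 / σ := by
    have := intervalIntegral.integral_eq_sub_of_hasDerivAt (a := 1) (b := y)
      (f := fun t => t ^ σ / σ)
      (f' := fun t => t ^ σ / t)
      (by
        intro t ht
        rw [hu] at ht
        have h2 := (Real.hasDerivAt_rpow_const (p := σ) (Or.inl (hp t ht).ne')).div_const σ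
        refine h2.congr_deriv ?_
        rw [Real.rpow_sub_one (hp t ht).ne']
        field_simp)
      (by
        apply ContinuousOn.intervalIntegrable
        rw [hu]
        exact (hc σ).div continuousOn_id (fun t ht => (hp t ht).ne'))
    rw [this]; simp
  rw [e1] at this
  have h3 := (abs_le.1 this).2
  have : 0 < 1 / σ := by positivity
  have e : (1 / σ + 2 * C) * y ^ σ = y ^ σ / σ + 2 * C * y ^ σ := by ring
  rw [e]
  linarith

end

section

lemma log_sub_lower (x : ℝ) (hx : 2 ≤ x) (n : ℕ) (hn : n ∈ Finset.Icc 0 ⌊x/2⌋₊) :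
    Real.log 2 ≤ Real.log x - Real.log n := by
  have hn2 : (n:ℝ) ≤ x/2 := (Nat.le_floor_iff (by linarith)).1 (Finset.mem_Icc.1 hn).2
  rcases Nat.eq_zero_or_pos n with h | h
  · subst h; simp; exact Real.log_le_log (by norm_num) hx
  · have : Real.log n ≤ Real.log (x/2) := Real.log_le_log (by exact_mod_cast h) hn2
    rw [Real.log_div (by linarith) (by norm_num)] at this
    linarith

lemma BW.e1 {b : ℕ → ℝ} {C c1 : ℝ} (H : BW b C c1) :
    ∃ K, 0 ≤ K ∧ ∀ x : ℝ, 4 ≤ x → 1 ≤ Real.log (Real.log x) → 1 ≤ Real.log x →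
      ∑ n ∈ Finset.Icc 0 ⌊x/2⌋₊, b n * (Real.log x - Real.log n)⁻¹
        ≤ K * Real.log (Real.log x) / Real.log x := by
  have hC := H.C_nonneg
  have hl2 : 0 < Real.log 2 := Real.log_pos (by norm_num)
  refine ⟨2 + |c1| + 2 * C + |Real.log (Real.log 2)| + 2 * C * (Real.log 2)⁻¹, by positivity, ?_⟩
  intro x hx hl hX
  set l := Real.log (Real.log x) with hldef
  set X := Real.log x with hXdef
  have hXpos : 0 < X := by linarith
  have e : ∑ n ∈ Finset.Icc 0 ⌊x/2⌋₊, b n * (X - Real.log n)⁻¹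
      = (∑ n ∈ Finset.Icc 0 ⌊x/2⌋₊, b n + ∑ n ∈ Finset.Icc 0 ⌊x/2⌋₊,
          b n * (Real.log n * (X - Real.log n)⁻¹)) / X := by
    rw [← Finset.sum_add_distrib, Finset.sum_div]
    apply Finset.sum_congr rfl
    intro n hn
    have := log_sub_lower x (by linarith) n hn
    have : 0 < X - Real.log n := by linarith
    field_simp
    ring
  rw [e]
  apply div_le_div_of_nonneg_right _ hXpos.le
  have h1 := (abs_le.1 (H.e1a x (by linarith))).2
  have h2 := (abs_le.1 (H.mertens2 x (by linarith))).2
  have h3 : ∑ n ∈ Finset.Icc 0 ⌊x/2⌋₊, b n ≤ ∑ n ∈ Finset.Icc 0 ⌊x⌋₊, b n := by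
    apply Finset.sum_le_sum_of_subset_of_nonneg
    · exact Finset.Icc_subset_Icc le_rfl (Nat.floor_le_floor (by linarith))
    · intro i _ _; exact H.nn i
  have h4 : 2 * C / X ≤ 2 * C := div_le_self (by linarith) hX
  have h5 := le_abs_self c1
  have h6 := neg_abs_le (Real.log (Real.log 2))
  have h7 : 0 ≤ |c1| + 2 * C + |Real.log (Real.log 2)| + 2 * C * (Real.log 2)⁻¹ := by positivity
  have h8 := mul_le_mul_of_nonneg_left hl h7
  simp only [← hldef, ← hXdef] at h1 h2
  linarith

lemma BW.iii {b : ℕ → ℝ} {C c1 : ℝ} (H : BW b C c1) (σ : ℝ) (hσ : 0 < σ) :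
    ∃ K, 0 ≤ K ∧ ∀ x : ℝ, 2 ≤ x →
      ∑ n ∈ Finset.Icc 0 ⌊x⌋₊, b n * (n:ℝ) ^ σ ≤ K * (x ^ σ / Real.log x) := by
  have hC := H.C_nonneg
  have hl2 : 0 < Real.log 2 := Real.log_pos (by norm_num)
  set K1 := 1 + 1 / (Real.log 2 * (σ / 2)) with hK1
  have hK1p : 0 < K1 := by positivity
  refine ⟨K1 * (1 / (σ/2) + 2 * C), by positivity, ?_⟩
  intro x hx
  have hX : 0 < Real.log x := Real.log_pos (by linarith)
  have hxp : 0 < x := by linarith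
  have key : ∀ n ∈ Finset.Icc 0 ⌊x⌋₊, b n * (n:ℝ) ^ σ ≤
      (K1 * x ^ (σ/2) / Real.log x) * (b n * (Real.log n * (n:ℝ) ^ (σ/2))) := by
    intro n hn
    have hn2 : (n:ℝ) ≤ x := (Nat.le_floor_iff (by linarith)).1 (Finset.mem_Icc.1 hn).2
    rcases Nat.lt_or_ge n 2 with h | h
    · interval_cases n
      · simp [H.z0]
      · simp [H.z1]
    · have hnr : (2:ℝ) ≤ n := by exact_mod_cast h
      have hnp : (0:ℝ) < n := by linarith
      have hln : Real.log 2 ≤ Real.log n := Real.log_le_log (by norm_num) hnr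
      have hq : 1 ≤ x / n := by rw [le_div_iff₀ hnp]; linarith
      have hqs : 1 ≤ (x/n) ^ (σ/2) := Real.one_le_rpow hq (by positivity)
      have h1 : Real.log (x/n) ≤ (x/n)^(σ/2) / (σ/2) := Real.log_le_rpow_div (by positivity) (by positivity)
      have h2 : Real.log x = Real.log n + Real.log (x/n) := by
        rw [Real.log_div hxp.ne' hnp.ne']; ring
      have h3 : Real.log x ≤ K1 * (Real.log n * (x/n)^(σ/2)) := by
        rw [h2, hK1]
        have a1 : Real.log n ≤ Real.log n * (x/n)^(σ/2) :=
          le_mul_of_one_le_right (by linarith) hqs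
        have a2 : (x/n)^(σ/2) / (σ/2) ≤ (1 / (Real.log 2 * (σ / 2))) * (Real.log n * (x/n)^(σ/2)) := by
          have : (1 / (Real.log 2 * (σ / 2))) * (Real.log n * (x/n)^(σ/2))
            = (Real.log n / Real.log 2) * ((x/n)^(σ/2) / (σ/2)) := by field_simp
          rw [this]
          apply le_mul_of_one_le_left (by positivity)
          rw [le_div_iff₀ hl2]; linarith
        linarith
      have h4 : (n:ℝ)^σ = (n:ℝ)^(σ/2) * (n:ℝ)^(σ/2) := by
        rw [← Real.rpow_add hnp]; congr 1; ring
      have h5 : (x/n)^(σ/2) * (n:ℝ)^(σ/2) = x^(σ/2) := by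
        rw [← Real.mul_rpow (by positivity) hnp.le]; congr 1; field_simp
      have h6 : (n:ℝ)^σ * Real.log x ≤ K1 * x^(σ/2) * (Real.log n * (n:ℝ)^(σ/2)) := by
        calc (n:ℝ)^σ * Real.log x ≤ (n:ℝ)^σ * (K1 * (Real.log n * (x/n)^(σ/2))) :=
              mul_le_mul_of_nonneg_left h3 (by positivity)
          _ = K1 * ((x/n)^(σ/2) * (n:ℝ)^(σ/2)) * (Real.log n * (n:ℝ)^(σ/2)) := by rw [h4]; ring
          _ = _ := by rw [h5]
      have h7 : (n:ℝ)^σ ≤ K1 * x^(σ/2) / Real.log x * (Real.log n * (n:ℝ)^(σ/2)) := by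
        rw [div_mul_eq_mul_div, le_div_iff₀ hX]; exact h6
      calc b n * (n:ℝ)^σ ≤ b n * (K1 * x^(σ/2) / Real.log x * (Real.log n * (n:ℝ)^(σ/2))) :=
            mul_le_mul_of_nonneg_left h7 (H.nn n)
        _ = _ := by ring
  refine (Finset.sum_le_sum key).trans ?_
  rw [← Finset.mul_sum]
  have h1 := H.rp (σ/2) (by positivity) x (by linarith)
  refine (mul_le_mul_of_nonneg_left h1 (by positivity)).trans (le_of_eq ?_)
  have h4 : x^σ = x^(σ/2) * x^(σ/2) := by
    rw [← Real.rpow_add hxp]; congr 1; ring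
  rw [h4]; ring

lemma BW.iv {b : ℕ → ℝ} {C c1 : ℝ} (H : BW b C c1) (σ : ℝ) (hσ : 0 < σ) :
    ∃ K, 0 ≤ K ∧ ∀ x : ℝ, 4 ≤ x → 1 ≤ Real.log (Real.log x) → 1 ≤ Real.log x →
      ∑ n ∈ Finset.Icc 0 ⌊x/2⌋₊, b n * (n:ℝ) ^ σ * ∑ m ∈ Finset.Icc 0 ⌊x/n⌋₊, b m * (m:ℝ)^σ
        ≤ K * (x ^ σ * Real.log (Real.log x) / Real.log x) := by
  obtain ⟨K1, hK1, h1⟩ := H.iii σ hσ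
  obtain ⟨K2, hK2, h2⟩ := H.e1
  refine ⟨K1 * K2, by positivity, ?_⟩
  intro x hx hl hX
  have hxp : 0 < x := by linarith
  have key : ∀ n ∈ Finset.Icc 0 ⌊x/2⌋₊,
      b n * (n:ℝ) ^ σ * ∑ m ∈ Finset.Icc 0 ⌊x/n⌋₊, b m * (m:ℝ)^σ ≤
       K1 * x^σ * (b n * (Real.log x - Real.log n)⁻¹) := by
    intro n hn
    have hn2 : (n:ℝ) ≤ x/2 := (Nat.le_floor_iff (by linarith)).1 (Finset.mem_Icc.1 hn).2
    rcases Nat.eq_zero_or_pos n with h | h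
    · subst h; simp [H.z0]
    · have hnp : (0:ℝ) < n := by exact_mod_cast h
      have hq : 2 ≤ x / n := by rw [le_div_iff₀ hnp]; linarith
      have a1 := h1 (x/n) hq
      have a2 : (n:ℝ)^σ * (x/n)^σ = x^σ := by
        rw [← Real.mul_rpow hnp.le (by positivity)]; congr 1; field_simp
      have a3 : Real.log (x/n) = Real.log x - Real.log n := Real.log_div hxp.ne' hnp.ne'
      calc b n * (n:ℝ) ^ σ * ∑ m ∈ Finset.Icc 0 ⌊x/n⌋₊, b m * (m:ℝ)^σ
          ≤ b n * (n:ℝ) ^ σ * (K1 * ((x/n) ^ σ / Real.log (x/n))) :=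
            mul_le_mul_of_nonneg_left a1 (mul_nonneg (H.nn n) (by positivity))
        _ = K1 * ((n:ℝ)^σ * (x/n)^σ) * (b n * (Real.log (x/n))⁻¹) := by ring
        _ = _ := by rw [a2, a3]
  refine (Finset.sum_le_sum key).trans ?_
  rw [← Finset.mul_sum]
  refine (mul_le_mul_of_nonneg_left (h2 x hx hl hX) (by positivity)).trans (le_of_eq ?_)
  ring

lemma li2_bound (v : ℝ) (hv : 0 < v) (hv1 : v < 1) :
    ∃ D, HasSum (fun k : ℕ => v^(k+1) / ((k:ℝ)+1)^2) D ∧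
      |Real.pi^2/6 - D| ≤ 2 * (-Real.log (1 - v)) * (1 - v) / v := by
  have hz : HasSum (fun k : ℕ => 1 / ((k:ℝ)+1)^2) (Real.pi^2/6) := by
    have := (hasSum_nat_add_iff' 1).2 hasSum_zeta_two
    simpa using this
  have hlog : HasSum (fun k : ℕ => v^(k+1) / ((k:ℝ)+1)) (-Real.log (1-v)) :=
    Real.hasSum_pow_div_log_of_abs_lt_one (by rw [abs_of_pos hv]; exact hv1)
  have hle : ∀ k : ℕ, v^(k+1) ≤ 1 := fun k => pow_le_one₀ hv.le hv1.le
  have hsum : Summable (fun k : ℕ => v^(k+1) / ((k:ℝ)+1)^2) := by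
    refine Summable.of_nonneg_of_le (fun k => by positivity) (fun k => ?_) hz.summable
    exact div_le_div_of_nonneg_right (hle k) (by positivity)
  obtain ⟨D, hD⟩ := hsum
  refine ⟨D, hD, ?_⟩
  have hlog2 : HasSum (fun k : ℕ => v^(k+1) / ((k:ℝ)+2)) ((-Real.log (1-v) - v)/v) := by
    have := ((hasSum_nat_add_iff' 1).2 hlog).div_const v
    simp only [Finset.range_one, Finset.sum_singleton] at this
    have e1 : (fun k : ℕ => v^(k+1) / ((k:ℝ)+2)) =
        fun i : ℕ => v ^ (i + 1 + 1) / (((i + 1 : ℕ) : ℝ) + 1) / v := by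
      funext k; push_cast; field_simp; ring
    have e2 : (-Real.log (1-v) - v)/v =
        (-Real.log (1 - v) - v ^ (0 + 1) / (((0 : ℕ) : ℝ) + 1)) / v := by simp
    rw [e1, e2]; exact this
  have htel : HasSum (fun k : ℕ => 1/((k:ℝ)+1) - 1/((k:ℝ)+2)) 1 := by
    have h0 : Tendsto (fun n : ℕ => 1/((n:ℝ)+1)) atTop (𝓝 0) := tendsto_one_div_add_atTop_nhds_zero_nat
    rw [hasSum_iff_tendsto_nat_of_nonneg]
    · have : ∀ n : ℕ, ∑ k ∈ Finset.range n, (1/((k:ℝ)+1) - 1/((k:ℝ)+2)) = 1 - 1/((n:ℝ)+1) := by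
        intro n
        induction n with
        | zero => simp
        | succ n ih => rw [Finset.sum_range_succ, ih]; push_cast; ring
      simp_rw [this]
      simpa using h0.const_sub 1
    · intro k
      rw [sub_nonneg]
      apply one_div_le_one_div_of_le <;> [positivity; linarith]
  have hbig := ((htel.sub (hlog.sub hlog2))).mul_left 2
  have hsmall := hz.sub hD
  have hnn : 0 ≤ Real.pi^2/6 - D := by
    refine hsmall.nonneg (fun k => ?_)
    rw [sub_nonneg]
    exact div_le_div_of_nonneg_right (hle k) (by positivity)
  rw [abs_of_nonneg hnn]
  have := hasSum_le (fun k => ?_) hsmall hbig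
  · refine this.trans (le_of_eq ?_)
    field_simp
    ring
  · have e1 : 1 / ((k:ℝ)+1)^2 - v^(k+1) / ((k:ℝ)+1)^2 = (1 - v^(k+1)) * (1 / ((k:ℝ)+1)^2) := by ring
    have e2 : 2 * (1/((k:ℝ)+1) - 1/((k:ℝ)+2) - (v^(k+1) / ((k:ℝ)+1) - v^(k+1) / ((k:ℝ)+2)))
      = (1 - v^(k+1)) * (2 * (1/((k:ℝ)+1) - 1/((k:ℝ)+2))) := by ring
    show 1 / ((k:ℝ)+1)^2 - v^(k+1) / ((k:ℝ)+1)^2 ≤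
      2 * (1/((k:ℝ)+1) - 1/((k:ℝ)+2) - (v^(k+1) / ((k:ℝ)+1) - v^(k+1) / ((k:ℝ)+2)))
    rw [e1, e2]
    apply mul_le_mul_of_nonneg_left _ (by linarith [hle k])
    have e3 : 2 * (1/((k:ℝ)+1) - 1/((k:ℝ)+2)) = 2 / (((k:ℝ)+1)*((k:ℝ)+2)) := by
      field_simp; ring
    rw [e3, div_le_div_iff₀ (by positivity) (by positivity)]
    have : (0:ℝ) ≤ k := by positivity
    nlinarith

/-- the logarithmic sum -/
lemma BW.logsum {b : ℕ → ℝ} {C c1 : ℝ} (H : BW b C c1) (x : ℝ) (hx : 4 ≤ x) :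
    |∑ n ∈ Finset.Icc 0 ⌊x/2⌋₊, b n * Real.log (1 - Real.log n / Real.log x) + Real.pi^2/6|
      ≤ (4 * C + 4) * (Real.log (Real.log x) - Real.log (Real.log 2)) / Real.log x := by
  have hC := H.C_nonneg
  have hl2 : 0 < Real.log 2 := Real.log_pos (by norm_num)
  set X := Real.log x with hX
  have hl4 : 2 * Real.log 2 ≤ X := by
    have : Real.log 4 = 2 * Real.log 2 := by
      rw [show (4:ℝ) = 2^2 by norm_num, Real.log_pow]; norm_num
    rw [← this]; exact Real.log_le_log (by norm_num) hx
  have hXp : 0 < X := by linarith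
  have hY : Real.log (x/2) = X - Real.log 2 := Real.log_div (by linarith) (by norm_num)
  set v := Real.log (x/2) / X with hv
  have h1v : 1 - v = Real.log 2 / X := by rw [hv, hY]; field_simp; ring
  have hvhalf : 1/2 ≤ v := by
    have : Real.log 2 / X ≤ 1/2 := by rw [div_le_iff₀ hXp]; linarith
    linarith
  have hv1 : v < 1 := by
    have : 0 < Real.log 2 / X := by positivity
    linarith
  have hv0 : 0 < v := by linarith
  set Λ := Real.log X - Real.log (Real.log 2) with hΛ
  have hlogv : -Real.log (1 - v) = Λ := by
    rw [h1v, Real.log_div hl2.ne' hXp.ne']; ring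
  obtain ⟨D, hD, hDb⟩ := li2_bound v hv0 hv1
  have hlog : HasSum (fun k : ℕ => v^(k+1) / ((k:ℝ)+1)) Λ := by
    rw [← hlogv]; exact Real.hasSum_pow_div_log_of_abs_lt_one (by rw [abs_of_pos hv0]; exact hv1)
  have hΛ0 : 0 ≤ Λ := hlog.nonneg (fun k => by positivity)
  -- series for each term
  have hser : HasSum (fun k : ℕ => ∑ n ∈ Finset.Icc 0 ⌊x/2⌋₊, b n *
      ((Real.log n / X)^(k+1) / ((k:ℝ)+1)))
      (∑ n ∈ Finset.Icc 0 ⌊x/2⌋₊, b n * (-Real.log (1 - Real.log n / X))) := by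
    apply hasSum_sum
    intro n hn
    apply HasSum.mul_left
    apply Real.hasSum_pow_div_log_of_abs_lt_one
    have h2 := log_sub_lower x (by linarith) n hn
    have h3 : 0 ≤ Real.log n := Real.log_natCast_nonneg n
    rw [abs_of_nonneg (by positivity), div_lt_one hXp]
    linarith
  have hdiff := hser.sub hD
  have hbd : HasSum (fun k : ℕ => (2 * C / X / v) * (v^(k+1) / ((k:ℝ)+1))) ((2 * C / X / v) * Λ) :=
    hlog.mul_left _
  have hterm : ∀ k : ℕ, |∑ n ∈ Finset.Icc 0 ⌊x/2⌋₊, b n * ((Real.log n / X)^(k+1) / ((k:ℝ)+1))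
      - v^(k+1) / ((k:ℝ)+1)^2| ≤ (2 * C / X / v) * (v^(k+1) / ((k:ℝ)+1)) := by
    intro k
    have h1 := H.pow (x/2) (by linarith) k
    have e1 : ∑ n ∈ Finset.Icc 0 ⌊x/2⌋₊, b n * ((Real.log n / X)^(k+1) / ((k:ℝ)+1))
      - v^(k+1) / ((k:ℝ)+1)^2 = (∑ n ∈ Finset.Icc 0 ⌊x/2⌋₊, b n * Real.log n ^ (k+1)
        - Real.log (x/2) ^ (k+1) / (k+1)) * (1 / (X^(k+1) * ((k:ℝ)+1))) := by
      rw [sub_mul, Finset.sum_mul]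
      congr 1
      · apply Finset.sum_congr rfl
        intro n _
        rw [div_pow]; field_simp
      · rw [hv, div_pow]; field_simp
    rw [e1, abs_mul, abs_of_nonneg (by positivity : (0:ℝ) ≤ 1 / (X^(k+1) * ((k:ℝ)+1)))]
    refine (mul_le_mul_of_nonneg_right h1 (by positivity)).trans (le_of_eq ?_)
    have e2 : v^(k+1) = v * (Real.log (x/2)^k / X^k) := by rw [← div_pow, ← hv]; ring
    rw [e2]
    field_simp
    ring
  have hmain : |∑ n ∈ Finset.Icc 0 ⌊x/2⌋₊, b n * (-Real.log (1 - Real.log n / X)) - D|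
      ≤ (2 * C / X / v) * Λ := by
    rw [abs_le]
    constructor
    · have := hasSum_le (fun k => (abs_le.1 (hterm k)).1) hbd.neg hdiff
      exact this
    · exact hasSum_le (fun k => (abs_le.1 (hterm k)).2) hdiff hbd
  have e3 : ∑ n ∈ Finset.Icc 0 ⌊x/2⌋₊, b n * (-Real.log (1 - Real.log n / X))
      = - ∑ n ∈ Finset.Icc 0 ⌊x/2⌋₊, b n * Real.log (1 - Real.log n / X) := by
    rw [← Finset.sum_neg_distrib]; apply Finset.sum_congr rfl; intros; ring
  rw [e3] at hmain
  rw [hlogv, h1v] at hDb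
  have b1 : (2 * C / X / v) * Λ ≤ 4 * C * Λ / X := by
    have : 2 * C / X / v ≤ 4 * C / X := by
      rw [div_le_iff₀ hv0]
      have : 0 ≤ C / X := by positivity
      have e : 4 * C / X * v = (C/X) * (4 * v) := by ring
      have e' : 2 * C / X = (C/X) * 2 := by ring
      rw [e, e']
      exact mul_le_mul_of_nonneg_left (by linarith) this
    calc _ ≤ 4 * C / X * Λ := mul_le_mul_of_nonneg_right this hΛ0
      _ = _ := by ring
  have b2 : 2 * Λ * (Real.log 2 / X) / v ≤ 4 * Λ / X := by
    rw [div_le_iff₀ hv0]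
    have hlog2 : Real.log 2 ≤ 1 := by
      have := Real.log_two_lt_d9; linarith
    have q : 0 ≤ Λ / X := by positivity
    have e : 2 * Λ * (Real.log 2 / X) = (Λ/X) * (2 * Real.log 2) := by ring
    have e' : 4 * Λ / X * v = (Λ/X) * (4 * v) := by ring
    rw [e, e']
    exact mul_le_mul_of_nonneg_left (by linarith) q
  have e4 : (4 * C + 4) * Λ / X = 4 * C * Λ / X + 4 * Λ / X := by ring
  rw [e4]
  have m1 := abs_le.1 hmain
  have m2 := abs_le.1 hDb
  rw [abs_le]
  constructor <;> linarith [m1.1, m1.2, m2.1, m2.2]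

end

section

lemma BW.pair {b : ℕ → ℝ} {C c1 : ℝ} (H : BW b C c1) :
    ∃ K, 0 ≤ K ∧ ∀ x : ℝ, 4 ≤ x → 1 ≤ Real.log (Real.log x) → 1 ≤ Real.log x →
      |∑ n ∈ Finset.Icc 0 ⌊x/2⌋₊, b n * ∑ m ∈ Finset.Icc 0 ⌊x/n⌋₊, b m
        - ((Real.log (Real.log x) + c1)^2 - Real.pi^2/6)|
        ≤ K * Real.log (Real.log x) / Real.log x := by
  have hC := H.C_nonneg
  have hl2 : 0 < Real.log 2 := Real.log_pos (by norm_num)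
  have hl21 : Real.log 2 ≤ 1 := by have := Real.log_two_lt_d9; linarith
  obtain ⟨K2, hK2, h2⟩ := H.e1
  refine ⟨(1 + |c1|) * (2 + 4 * C) + (4 * C + 4) * (1 + |Real.log (Real.log 2)|) + 2 * C * K2,
    by positivity, ?_⟩
  intro x hx hl hX1
  have hE1 := h2 x hx hl hX1
  have hLS := H.logsum x hx
  have hM := H.mertens2 (x/2) (by linarith)
  have hY : Real.log (x/2) = Real.log x - Real.log 2 := Real.log_div (by linarith) (by norm_num)
  set l := Real.log (Real.log x) with hldef
  set X := Real.log x with hXdef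
  have hl4 : 2 * Real.log 2 ≤ X := by
    have : Real.log 4 = 2 * Real.log 2 := by
      rw [show (4:ℝ) = 2^2 by norm_num, Real.log_pow]; norm_num
    rw [← this]; exact Real.log_le_log (by norm_num) hx
  have hXp : 0 < X := by linarith
  have hxp : 0 < x := by linarith
  set L2 := ∑ n ∈ Finset.Icc 0 ⌊x/2⌋₊, b n with hL2
  -- L2 estimate
  have hL2b : |L2 - (l + c1)| ≤ (2 + 4 * C) / X := by
    have hw : Real.log (Real.log (x/2)) = l + Real.log (1 - Real.log 2 / X) := by
      rw [hY, hldef, ← Real.log_mul hXp.ne']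
      · congr 1; field_simp
      · have : Real.log 2 / X ≤ 1/2 := by rw [div_le_iff₀ hXp]; linarith
        linarith
    have hw2 : |Real.log (1 - Real.log 2 / X)| ≤ 2 / X := by
      have hh : Real.log 2 / X ≤ 1/2 := by rw [div_le_iff₀ hXp]; linarith
      have hpos : 0 < 1 - Real.log 2 / X := by linarith
      have hq : 0 ≤ Real.log 2 / X := by positivity
      have a1 := Real.one_sub_inv_le_log_of_pos hpos
      have a2 : Real.log (1 - Real.log 2 / X) ≤ 0 := Real.log_nonpos hpos.le (by linarith)
      rw [abs_of_nonpos a2]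
      have a3 : (1 - Real.log 2 / X)⁻¹ ≤ 1 + 2 * (Real.log 2 / X) := by
        rw [inv_le_comm₀ hpos (by positivity), inv_eq_one_div, div_le_iff₀ (by positivity)]
        nlinarith
      have a4 : 2 * (Real.log 2 / X) ≤ 2 / X := by
        rw [← mul_div_assoc]; apply div_le_div_of_nonneg_right _ hXp.le; linarith
      linarith
    have hw3 : 2 * C / Real.log (x/2) ≤ 4 * C / X := by
      rw [hY, div_le_div_iff₀ (by linarith) hXp]
      nlinarith
    rw [hw] at hM
    have e : (2 + 4 * C) / X = 2 / X + 4 * C / X := by ring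
    rw [e]
    rw [abs_le] at *
    constructor <;> linarith [hM.1, hM.2, hw2.1, hw2.2]
  -- decomposition
  have hterm : ∀ n ∈ Finset.Icc 0 ⌊x/2⌋₊, |b n * ∑ m ∈ Finset.Icc 0 ⌊x/n⌋₊, b m
      - (b n * (l + c1) + b n * Real.log (1 - Real.log n / X))|
      ≤ 2 * C * (b n * (X - Real.log n)⁻¹) := by
    intro n hn
    have hn2 : (n:ℝ) ≤ x/2 := (Nat.le_floor_iff (by linarith)).1 (Finset.mem_Icc.1 hn).2
    rcases Nat.eq_zero_or_pos n with h | h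
    · subst h; simp [H.z0]
    · have hnp : (0:ℝ) < n := by exact_mod_cast h
      have hq : 2 ≤ x / n := by rw [le_div_iff₀ hnp]; linarith
      have a1 := H.mertens2 (x/n) (by linarith)
      have a3 : Real.log (x/n) = X - Real.log n := Real.log_div hxp.ne' hnp.ne'
      have a4 : 0 < X - Real.log n := by
        have := log_sub_lower x (by linarith) n hn
        linarith
      have a5 : Real.log (X - Real.log n) = l + Real.log (1 - Real.log n / X) := by
        have e : 1 - Real.log n / X = (X - Real.log n) / X := by field_simp
        rw [e, Real.log_div a4.ne' hXp.ne']; ring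
      rw [a3, a5] at a1
      have e : b n * ∑ m ∈ Finset.Icc 0 ⌊x/n⌋₊, b m
        - (b n * (l + c1) + b n * Real.log (1 - Real.log n / X)) =
        b n * (∑ m ∈ Finset.Icc 0 ⌊x/n⌋₊, b m - (l + Real.log (1 - Real.log n / X)) - c1) := by ring
      rw [e, abs_mul, abs_of_nonneg (H.nn n)]
      refine (mul_le_mul_of_nonneg_left a1 (H.nn n)).trans (le_of_eq ?_)
      rw [div_eq_mul_inv]; ring
  have hsum := (Finset.abs_sum_le_sum_abs _ _).trans (Finset.sum_le_sum hterm)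
  rw [Finset.sum_sub_distrib, Finset.sum_add_distrib, ← Finset.sum_mul, ← Finset.mul_sum,
    ← hL2] at hsum
  set G1 := ∑ n ∈ Finset.Icc 0 ⌊x/2⌋₊, b n * ∑ m ∈ Finset.Icc 0 ⌊x/n⌋₊, b m
  set G2 := ∑ n ∈ Finset.Icc 0 ⌊x/2⌋₊, b n * Real.log (1 - Real.log n / X)
  have hE2 := mul_le_mul_of_nonneg_left hE1 (by positivity : 0 ≤ 2 * C)
  have hs2 := hsum.trans hE2
  have hlc : |l + c1| ≤ (1 + |c1|) * l := by
    have := abs_add_le l c1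
    rw [abs_of_nonneg (by linarith : 0 ≤ l)] at this
    have := mul_le_mul_of_nonneg_left hl (abs_nonneg c1)
    linarith
  have hp : |(L2 - (l + c1)) * (l + c1)| ≤ (1 + |c1|) * (2 + 4 * C) * l / X := by
    rw [abs_mul]
    refine (mul_le_mul hL2b hlc (abs_nonneg _) (by positivity)).trans (le_of_eq ?_)
    ring
  have hls : (4 * C + 4) * (l - Real.log (Real.log 2)) / X ≤
      (4 * C + 4) * (1 + |Real.log (Real.log 2)|) * l / X := by
    apply div_le_div_of_nonneg_right _ hXp.le
    rw [mul_assoc]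
    apply mul_le_mul_of_nonneg_left _ (by positivity)
    have := neg_abs_le (Real.log (Real.log 2))
    have := mul_le_mul_of_nonneg_left hl (abs_nonneg (Real.log (Real.log 2)))
    linarith
  have hls2 := hLS.trans hls
  have efin : ((1 + |c1|) * (2 + 4 * C) + (4 * C + 4) * (1 + |Real.log (Real.log 2)|) + 2 * C * K2) * l / X
    = (1 + |c1|) * (2 + 4 * C) * l / X + (4 * C + 4) * (1 + |Real.log (Real.log 2)|) * l / X
      + 2 * C * (K2 * l / X) := by ring
  rw [efin]
  have e0 : G1 - ((l + c1)^2 - Real.pi^2/6) = (G1 - (L2 * (l + c1) + G2)) + (L2 - (l + c1)) * (l + c1)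
     + (G2 + Real.pi^2/6) := by ring
  rw [e0]
  refine (abs_add_three _ _ _).trans ?_
  linarith

end

section

variable {P : Type*} {N : P → ℕ}

lemma Nm_add (m n : P →₀ ℕ) : Nm N (m + n) = Nm N m * Nm N n := by
  unfold Nm
  exact Finsupp.prod_add_index' (by simp) (by intro a b c; exact pow_add _ _ _)

lemma Nm_zero : Nm N (0 : P →₀ ℕ) = 1 := by simp [Nm]

lemma Nm_single (p : P) (k : ℕ) : Nm N (Finsupp.single p k) = N p ^ k := by
  unfold Nm; rw [Finsupp.prod_single_index]; simp

lemma Nm_pos (hN : ∀ p, 2 ≤ N p) (m : P →₀ ℕ) : 1 ≤ Nm N m := by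
  unfold Nm Finsupp.prod
  apply Nat.one_le_iff_ne_zero.2
  rw [Finset.prod_ne_zero_iff]
  intro p _
  have := hN p
  positivity

/-- elements of norm at most `x` -/
def SM (N : P → ℕ) (x : ℝ) : Finset (P →₀ ℕ) :=
  if h : {m : P →₀ ℕ | (Nm N m : ℝ) ≤ x}.Finite then h.toFinset else ∅

/-- indicator vector -/
def ind (h : ℕ) (T : Finset P) : P →₀ ℕ := Finsupp.indicator T (fun _ _ => h)

/-- norm of a finite set of primes -/
def NT (N : P → ℕ) (T : Finset P) : ℕ := ∏ p ∈ T, N p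

def UM (N : P → ℕ) (x : ℝ) : Finset (Finset P) :=
  ((SM N x).image Finsupp.support).filter (fun T => (NT N T : ℝ) ≤ x)

structure SY (N : P → ℕ) (κ τ C : ℝ) : Prop where
  hN : ∀ p, 2 ≤ N p
  fin : ∀ x : ℝ, {m : P →₀ ℕ | (Nm N m : ℝ) ≤ x}.Finite
  κpos : 0 < κ
  τ1 : 3/4 ≤ τ
  τ2 : τ < 1
  C0 : 0 ≤ C
  bd : ∀ y : ℝ, 0 < y → |((SM N y).card : ℝ) - κ * y| ≤ C * y ^ τ
  bdl : ∀ y : ℝ, 1 ≤ y → |((SM N y).card : ℝ) - κ * y| * Real.log y ≤ C * y ^ τ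

section
variable {κ τ C : ℝ}

lemma SY.memSM (H : SY N κ τ C) {x : ℝ} {m : P →₀ ℕ} : m ∈ SM N x ↔ (Nm N m : ℝ) ≤ x := by
  unfold SM; rw [dif_pos (H.fin x)]; simp

lemma SY.Nm1 (H : SY N κ τ C) (m : P →₀ ℕ) : (1:ℝ) ≤ Nm N m := by
  exact_mod_cast Nm_pos H.hN m

lemma ind_apply (h : ℕ) (T : Finset P) (p : P) : ind h T p = if p ∈ T then h else 0 := by
  unfold ind; rw [Finsupp.indicator_apply]; split_ifs <;> rfl

lemma ind_support (h : ℕ) (hh : 1 ≤ h) (T : Finset P) : (ind h T).support = T := by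
  ext p; rw [Finsupp.mem_support_iff, ind_apply]; split_ifs <;> simp_all; omega

lemma Nm_ind (h : ℕ) (T : Finset P) : Nm N (ind h T) = NT N T ^ h := by
  rcases Nat.eq_zero_or_pos h with rfl | hh
  · have : ind 0 T = 0 := by ext p; rw [ind_apply]; simp
    rw [this, Nm_zero]; simp
  · unfold Nm Finsupp.prod
    rw [ind_support h hh, NT, ← Finset.prod_pow]
    apply Finset.prod_congr rfl
    intro p hp
    rw [ind_apply, if_pos hp]

lemma SY.NT1 (H : SY N κ τ C) (T : Finset P) : (1:ℝ) ≤ NT N T := by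
  have := H.Nm1 (ind 1 T)
  rwa [Nm_ind, pow_one] at this

lemma SY.memUM (H : SY N κ τ C) {x : ℝ} {T : Finset P} : T ∈ UM N x ↔ (NT N T : ℝ) ≤ x := by
  unfold UM
  rw [Finset.mem_filter, Finset.mem_image]
  refine ⟨fun h => h.2, fun h => ⟨⟨ind 1 T, ?_, ind_support 1 le_rfl T⟩, h⟩⟩
  rw [H.memSM, Nm_ind, pow_one]; exact h

lemma SY.SM_empty (H : SY N κ τ C) {x : ℝ} (hx : x < 1) : SM N x = ∅ := by
  apply Finset.eq_empty_of_forall_notMem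
  intro m hm
  rw [H.memSM] at hm
  linarith [H.Nm1 m]

lemma SY.SM_mono (H : SY N κ τ C) {x y : ℝ} (hx : x ≤ y) : SM N x ⊆ SM N y := by
  intro m; rw [H.memSM, H.memSM]; intro h; linarith

lemma SY.shift (H : SY N κ τ C) {E : Type*} [AddCommMonoid E] (x : ℝ) (d : P →₀ ℕ) (F : (P →₀ ℕ) → E) :
    ∑ n ∈ (SM N x).filter (fun n => d ≤ n), F n = ∑ m ∈ SM N (x / Nm N d), F (m + d) := by
  have hd := H.Nm1 d
  symm
  apply Finset.sum_bij' (fun m _ => m + d) (fun n _ => n - d)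
  · intro m hm
    rw [H.memSM, le_div_iff₀ (by linarith)] at hm
    rw [Finset.mem_filter, H.memSM, Nm_add]
    push_cast
    exact ⟨hm, le_add_self⟩
  · intro n hn
    rw [Finset.mem_filter, H.memSM] at hn
    rw [H.memSM, le_div_iff₀ (by linarith)]
    have : (Nm N (n - d) : ℝ) * Nm N d = Nm N n := by
      rw [← Nat.cast_mul, ← Nm_add, tsub_add_cancel_of_le hn.2]
    rw [this]; exact hn.1
  · intro m _; simp
  · intro n hn
    rw [Finset.mem_filter] at hn
    exact tsub_add_cancel_of_le hn.2
  · intros; rfl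

lemma ind_le_iff (h : ℕ) (hh : 1 ≤ h) (T : Finset P) (n : P →₀ ℕ) :
    ind h T ≤ n ↔ T ⊆ n.support.filter (fun p => h ≤ n p) := by
  constructor
  · intro hle p hp
    have := hle p
    rw [ind_apply, if_pos hp] at this
    rw [Finset.mem_filter, Finsupp.mem_support_iff]
    exact ⟨by omega, this⟩
  · intro hs p
    rw [ind_apply]
    split_ifs with hp
    · exact (Finset.mem_filter.1 (hs hp)).2
    · exact Nat.zero_le _

lemma Nm_mono (hN : ∀ p, 2 ≤ N p) {d n : P →₀ ℕ} (h : d ≤ n) : Nm N d ≤ Nm N n := by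
  have : Nm N (n - d) * Nm N d = Nm N n := by
    rw [← Nm_add, tsub_add_cancel_of_le h]
  rw [← this]
  exact Nat.le_mul_of_pos_left _ (Nm_pos hN _)

lemma SY.conv (H : SY N κ τ C) (h : ℕ) (hh : 1 ≤ h) (x : ℝ) (F : (P →₀ ℕ) → ℝ) (w : Finset P → ℝ) :
    ∑ n ∈ SM N x, F n * ∑ T ∈ (n.support.filter (fun p => h ≤ n p)).powerset, w T
      = ∑ T ∈ UM N x, w T * ∑ m ∈ SM N (x / (NT N T : ℝ) ^ h), F (m + ind h T) := by
  have h1 : ∀ n ∈ SM N x, F n * ∑ T ∈ (n.support.filter (fun p => h ≤ n p)).powerset, w T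
      = ∑ T ∈ UM N x, if ind h T ≤ n then w T * F n else 0 := by
    intro n hn
    rw [← Finset.sum_filter, mul_comm, Finset.sum_mul]
    apply Finset.sum_congr _ (fun _ _ => rfl)
    ext T
    rw [Finset.mem_powerset, Finset.mem_filter, ← ind_le_iff h hh, H.memUM]
    refine ⟨fun hle => ⟨?_, hle⟩, fun hle => hle.2⟩
    rw [H.memSM] at hn
    have h2 := Nm_mono H.hN hle
    rw [Nm_ind] at h2
    have h3 : NT N T ≤ NT N T ^ h := Nat.le_self_pow (by omega) _
    have : (NT N T : ℝ) ≤ Nm N n := by exact_mod_cast h3.trans h2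
    linarith
  rw [Finset.sum_congr rfl h1, Finset.sum_comm]
  apply Finset.sum_congr rfl
  intro T _
  rw [← Finset.sum_filter, ← Finset.mul_sum, H.shift, Nm_ind]
  push_cast; rfl

lemma SY.sum_UM_le (H : SY N κ τ C) (x : ℝ) (g : ℕ → ℝ) (hg : ∀ n, 0 ≤ g n) :
    ∑ T ∈ UM N x, g (NT N T) ≤ ∑ m ∈ SM N x, g (Nm N m) := by
  have : ∑ T ∈ UM N x, g (NT N T) = ∑ m ∈ (UM N x).image (ind 1), g (Nm N m) := by
    rw [Finset.sum_image]
    · simp [Nm_ind]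
    · intro a _ b _ hab
      rw [← ind_support 1 le_rfl a, hab, ind_support 1 le_rfl b]
  rw [this]
  apply Finset.sum_le_sum_of_subset_of_nonneg
  · intro m hm
    obtain ⟨T, hT, rfl⟩ := Finset.mem_image.1 hm
    rw [H.memSM, Nm_ind, pow_one]; exact H.memUM.1 hT
  · intros; exact hg _
end

lemma StarCond.fin (hN : ∀ p, 2 ≤ N p) {κ θ : ℝ} (hs : StarCond N κ θ) (x : ℝ) :
    {m : P →₀ ℕ | (Nm N m : ℝ) ≤ x}.Finite := by
  by_contra hinf
  obtain ⟨h1, h2, h3, h4⟩ := hs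
  have h5 : (fun y : ℝ => κ * y) =O[atTop] fun y : ℝ => y ^ θ := by
    refine (h4.neg_left).congr' ?_ EventuallyEq.rfl
    filter_upwards [eventually_ge_atTop x] with y hy
    have : {m : P →₀ ℕ | (Nm N m : ℝ) ≤ y}.Infinite := by
      apply Set.Infinite.mono _ hinf
      intro m hm; exact le_trans hm hy
    rw [this.ncard]; simp
  obtain ⟨K, hK⟩ := h5.bound
  have h6 := (tendsto_rpow_atTop (sub_pos.2 h3)).eventually_gt_atTop (K / κ)
  obtain ⟨y, ⟨hy1, hy2⟩, hy3⟩ := ((hK.and h6).and (eventually_gt_atTop (0:ℝ))).exists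
  have hyt : 0 < y ^ θ := Real.rpow_pos_of_pos hy3 _
  rw [Real.norm_of_nonneg (by positivity), Real.norm_of_nonneg hyt.le] at hy1
  rw [Real.rpow_sub hy3, Real.rpow_one, div_lt_div_iff₀ h1 hyt] at hy2
  linarith

lemma StarCond.SY (hN : ∀ p, 2 ≤ N p) {κ θ : ℝ} (hs : StarCond N κ θ) :
    ∃ τ C, SY N κ τ C := by
  have hfin := hs.fin hN
  have hcard : ∀ x : ℝ, {m : P →₀ ℕ | (Nm N m : ℝ) ≤ x}.ncard = (SM N x).card := by
    intro x
    unfold SM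
    rw [dif_pos (hfin x), Set.ncard_eq_toFinset_card _ (hfin x)]
  obtain ⟨h1, h2, h3, h4⟩ := hs
  simp only [hcard] at h4
  obtain ⟨K, hK⟩ := h4.bound
  obtain ⟨X, hX⟩ := eventually_atTop.1 hK
  set Y := max X 1 with hY
  have hY1 : 1 ≤ Y := le_max_right _ _
  set t := max θ (1/2) with ht
  have ht1 : θ ≤ t := le_max_left _ _
  have ht2 : 1/2 ≤ t := le_max_right _ _
  have ht3 : t < 1 := max_lt h3 (by norm_num)
  set τ := (1 + t) / 2 with hτ
  have hd : 0 < τ - t := by linarith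
  set B : ℝ := (SM N Y).card + κ * Y with hB
  have hB0 : 0 ≤ B := by positivity
  have hlY := Real.log_nonneg hY1
  have hSM : ∀ {x : ℝ} {m : P →₀ ℕ}, m ∈ SM N x ↔ (Nm N m : ℝ) ≤ x := by
    intro x m; unfold SM; rw [dif_pos (hfin x)]; simp
  have hbig : ∀ y, Y ≤ y → |((SM N y).card : ℝ) - κ * y| ≤ |K| * y ^ t := by
    intro y hy
    have hy1 : 1 ≤ y := hY1.trans hy
    have := hX y ((le_max_left _ _).trans hy)
    rw [Real.norm_eq_abs, Real.norm_of_nonneg (by positivity)] at this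
    calc _ ≤ K * y ^ θ := this
      _ ≤ |K| * y ^ θ := by gcongr; exact le_abs_self K
      _ ≤ |K| * y ^ t := by gcongr
  have hmid : ∀ y, 1 ≤ y → y ≤ Y → |((SM N y).card : ℝ) - κ * y| ≤ B := by
    intro y hy1 hy2
    have : (SM N y).card ≤ (SM N Y).card := by
      apply Finset.card_le_card
      intro m hm; rw [hSM] at hm ⊢; linarith
    have h6 : ((SM N y).card : ℝ) ≤ (SM N Y).card := by exact_mod_cast this
    have h7 : κ * y ≤ κ * Y := by gcongr
    have h8 : 0 ≤ κ * y := by positivity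
    have h9 : (0:ℝ) ≤ (SM N y).card := by positivity
    rw [abs_le]; constructor <;> linarith
  have hlow : ∀ y, 0 < y → y < 1 → ((SM N y).card : ℝ) = 0 := by
    intro y hy0 hy
    have : SM N y = ∅ := by
      apply Finset.eq_empty_of_forall_notMem
      intro m hm
      rw [hSM] at hm
      have : (1:ℝ) ≤ Nm N m := by exact_mod_cast Nm_pos hN m
      linarith
    simp [this]
  refine ⟨τ, |K| + |K| / (τ - t) + B + B * Real.log Y + κ, hN, hfin, h1, by linarith, by linarith,
    by positivity, ?_, ?_⟩
  · intro y hy0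
    have hyt : 0 ≤ y ^ τ := by positivity
    have e1 : 0 ≤ |K| / (τ - t) * y ^ τ := by positivity
    have e2 : 0 ≤ |K| * y ^ τ := by positivity
    have e3 : 0 ≤ B * y ^ τ := by positivity
    have e4 : 0 ≤ B * Real.log Y * y ^ τ := by positivity
    have e5 : 0 ≤ κ * y ^ τ := by positivity
    rcases lt_or_ge y 1 with hy | hy
    · rw [hlow y hy0 hy, zero_sub, abs_neg, abs_of_nonneg (by positivity)]
      have : y ≤ y ^ τ := by
        conv_lhs => rw [← Real.rpow_one y]
        exact Real.rpow_le_rpow_of_exponent_ge hy0 hy.le (by linarith)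
      have : κ * y ≤ κ * y ^ τ := by gcongr
      linarith
    · rcases le_total y Y with h | h
      · have h5 := hmid y hy h
        have : 1 ≤ y ^ τ := Real.one_le_rpow hy (by linarith)
        have : B * 1 ≤ B * y ^ τ := by gcongr
        linarith
      · have h5 := hbig y h
        have : |K| * y ^ t ≤ |K| * y ^ τ := by
          gcongr
          linarith
        linarith
  · intro y hy
    have hy0 : 0 < y := by linarith
    have hly := Real.log_nonneg hy
    have hyt : 0 ≤ y ^ τ := by positivity
    have e1 : 0 ≤ |K| / (τ - t) * y ^ τ := by positivity
    have e2 : 0 ≤ |K| * y ^ τ := by positivity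
    have e3 : 0 ≤ B * y ^ τ := by positivity
    have e4 : 0 ≤ B * Real.log Y * y ^ τ := by positivity
    have e5 : 0 ≤ κ * y ^ τ := by positivity
    rcases le_total y Y with h | h
    · have h5 := hmid y hy h
      have h6 : 1 ≤ y ^ τ := Real.one_le_rpow hy (by linarith)
      have h7 : Real.log y ≤ Real.log Y := Real.log_le_log hy0 h
      have : |((SM N y).card : ℝ) - κ * y| * Real.log y ≤ B * Real.log Y := by gcongr
      have : B * Real.log Y * 1 ≤ B * Real.log Y * y ^ τ := by gcongr
      linarith
    · have h5 := hbig y h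
      have h6 := Real.log_le_rpow_div hy0.le hd
      have : |((SM N y).card : ℝ) - κ * y| * Real.log y ≤ |K| * y ^ t * (y ^ (τ - t) / (τ - t)) := by
        gcongr
      have h8 : |K| * y ^ t * (y ^ (τ - t) / (τ - t)) = |K| / (τ - t) * y ^ τ := by
        have : y ^ τ = y ^ t * y ^ (τ - t) := by rw [← Real.rpow_add hy0]; ring_nf
        rw [this]; ring
      linarith

end

section

lemma dyad {ι : Type*} (c nn : ι → ℝ) (S : ℝ → Finset ι) (C τ : ℝ)
    (hc : ∀ i, 0 ≤ c i) (hn : ∀ i, 1 ≤ nn i) (hS : ∀ x i, i ∈ S x ↔ nn i ≤ x)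
    (hb : ∀ x : ℝ, 1 ≤ x → ∑ i ∈ S x, c i ≤ C * x) (h0 : 0 < τ) (h1 : τ < 1) :
    ∃ K, 0 ≤ K ∧ ∀ x : ℝ, 0 < x → ∑ i ∈ S x, c i * (x / nn i) ^ τ ≤ K * x := by
  have hC : 0 ≤ C := by
    have := hb 1 le_rfl
    rw [mul_one] at this
    exact (Finset.sum_nonneg (fun i _ => hc i)).trans this
  have h2 : (2:ℝ) ^ (τ - 1) < 1 := Real.rpow_lt_one_of_one_lt_of_neg (by norm_num) (by linarith)
  have h2t : (2:ℝ) ^ τ = 2 * 2 ^ (τ - 1) := by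
    rw [Real.rpow_sub (by norm_num), Real.rpow_one]; ring
  set K := 2 ^ τ * C / (1 - 2 ^ (τ - 1)) with hK
  have hKe : 2 ^ τ * C + 2 ^ (τ - 1) * K = K := by
    have : (1 - (2:ℝ) ^ (τ - 1)) ≠ 0 := by linarith
    rw [hK]; field_simp; ring
  have hK0 : 0 ≤ K := by
    apply div_nonneg (by positivity); linarith
  refine ⟨K, hK0, ?_⟩
  have key : ∀ n : ℕ, ∀ x : ℝ, 0 < x → x < 2 ^ n → ∑ i ∈ S x, c i * (x / nn i) ^ τ ≤ K * x := by
    intro n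
    induction n with
    | zero =>
      intro x hx0 hx
      have : S x = ∅ := by
        apply Finset.eq_empty_of_forall_notMem
        intro i hi; rw [hS] at hi; have := hn i; simp at hx; linarith
      rw [this]; simp; positivity
    | succ n ih =>
      intro x hx0 hx
      rcases lt_or_ge x 1 with hx1 | hx1
      · have : S x = ∅ := by
          apply Finset.eq_empty_of_forall_notMem
          intro i hi; rw [hS] at hi; have := hn i; linarith
        rw [this]; simp; positivity
      have ih' := ih (x/2) (by positivity) (by rw [pow_succ] at hx; linarith)
      have hsub : S (x/2) ⊆ S x := by
        intro i; rw [hS, hS]; intro h; linarith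
      rw [← Finset.sum_sdiff hsub]
      have e1 : ∑ i ∈ S x \ S (x/2), c i * (x / nn i) ^ τ ≤ 2 ^ τ * (C * x) := by
        calc _ ≤ ∑ i ∈ S x \ S (x/2), c i * 2 ^ τ := by
              apply Finset.sum_le_sum
              intro i hi
              rw [Finset.mem_sdiff, hS, hS, not_le] at hi
              have := hn i
              have hci := hc i
              gcongr
              rw [div_le_iff₀ (by linarith)]; linarith
          _ ≤ ∑ i ∈ S x, c i * 2 ^ τ := by
              apply Finset.sum_le_sum_of_subset_of_nonneg Finset.sdiff_subset
              intro i _ _; have := hc i; positivity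
          _ = 2 ^ τ * ∑ i ∈ S x, c i := by rw [← Finset.sum_mul, mul_comm]
          _ ≤ _ := by gcongr; exact hb x hx1
      have e2 : ∑ i ∈ S (x/2), c i * (x / nn i) ^ τ = 2 ^ τ * ∑ i ∈ S (x/2), c i * (x / 2 / nn i) ^ τ := by
        rw [Finset.mul_sum]
        apply Finset.sum_congr rfl
        intro i _
        have : x / nn i = 2 * (x / 2 / nn i) := by ring
        have h5 := hn i
        rw [this, Real.mul_rpow (by norm_num) (by positivity)]; ring
      rw [e2]
      have e3 : (2:ℝ) ^ τ * ∑ i ∈ S (x/2), c i * (x / 2 / nn i) ^ τ ≤ 2 ^ τ * (K * (x/2)) := by gcongr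
      have e4 : 2 ^ τ * (C * x) + 2 ^ τ * (K * (x/2)) = K * x := by
        clear_value K
        linear_combination x * hKe + (K * x / 2) * h2t
      linarith
  intro x hx
  obtain ⟨n, hn⟩ := pow_unbounded_of_one_lt x (by norm_num : (1:ℝ) < 2)
  exact key n x hx hn

lemma dyad2 {ι : Type*} (nn : ι → ℝ) (S : ℝ → Finset ι) (C s : ℝ)
    (hn : ∀ i, 1 ≤ nn i) (hS : ∀ x i, i ∈ S x ↔ nn i ≤ x)
    (hb : ∀ x : ℝ, 1 ≤ x → ((S x).card : ℝ) ≤ C * x) (h1 : 1 < s) :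
    Summable (fun i => (nn i) ^ (-s)) := by
  have hC : 0 ≤ C := by
    have := hb 1 le_rfl
    rw [mul_one] at this
    exact le_trans (by positivity) this
  set δ := s - 1 with hδ
  have hd : 0 < δ := by linarith
  have h2 : (1:ℝ) < 2 ^ δ := Real.one_lt_rpow (by norm_num) hd
  set B := 2 ^ s * C / (2 ^ δ - 1) with hB
  have hBe : B * (2 ^ δ - 1) = 2 ^ s * C := by
    have : ((2:ℝ) ^ δ - 1) ≠ 0 := by linarith
    rw [hB]; field_simp
  have hB0 : 0 ≤ B := by apply div_nonneg (by positivity); linarith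
  have hemp : ∀ x : ℝ, 1/2 ≤ x → x < 1 → ∑ i ∈ S x, (nn i) ^ (-s) ≤ B * 2 ^ δ - B * x ^ (-δ) := by
    intro x hx hx1
    have : S x = ∅ := by
      apply Finset.eq_empty_of_forall_notMem
      intro i hi; rw [hS] at hi; have := hn i; linarith
    rw [this, Finset.sum_empty, sub_nonneg]
    gcongr
    rw [Real.rpow_neg (by linarith), ← Real.inv_rpow (by linarith)]
    apply Real.rpow_le_rpow (by positivity) _ hd.le
    rw [inv_le_comm₀ (by linarith) (by norm_num)]; linarith
  have key : ∀ n : ℕ, ∀ x : ℝ, 1/2 ≤ x → x < 2 ^ n → ∑ i ∈ S x, (nn i) ^ (-s) ≤ B * 2 ^ δ - B * x ^ (-δ) := by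
    intro n
    induction n with
    | zero =>
      intro x hx0 hx
      exact hemp x hx0 (by simpa using hx)
    | succ n ih =>
      intro x hx0 hx
      rcases lt_or_ge x 1 with hx1 | hx1
      · exact hemp x hx0 hx1
      have ih' := ih (x/2) (by linarith) (by rw [pow_succ] at hx; linarith)
      have hsub : S (x/2) ⊆ S x := by
        intro i; rw [hS, hS]; intro h; linarith
      rw [← Finset.sum_sdiff hsub]
      have hx2 : (x/2) ^ (-δ) = 2 ^ δ * x ^ (-δ) := by
        rw [Real.div_rpow (by linarith) (by norm_num), Real.rpow_neg (by norm_num : (0:ℝ) ≤ 2), div_inv_eq_mul]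
        ring
      have hx3 : (x/2) ^ (-s) * x = 2 ^ s * x ^ (-δ) := by
        rw [Real.div_rpow (by linarith) (by norm_num), Real.rpow_neg (by norm_num : (0:ℝ) ≤ 2), div_inv_eq_mul]
        have : x ^ (-δ) = x ^ (-s) * x := by
          conv_rhs => rw [← Real.rpow_one x, ← Real.rpow_mul (by linarith), one_mul,
            ← Real.rpow_add (by linarith)]
          congr 1; rw [hδ]; ring
        rw [this]; ring
      have e1 : ∑ i ∈ S x \ S (x/2), (nn i) ^ (-s) ≤ (x/2) ^ (-s) * (C * x) := by
        calc _ ≤ ∑ i ∈ S x \ S (x/2), (x/2) ^ (-s) := by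
              apply Finset.sum_le_sum
              intro i hi
              rw [Finset.mem_sdiff, hS, hS, not_le] at hi
              exact Real.rpow_le_rpow_of_nonpos (by linarith) hi.2.le (by linarith)
          _ ≤ ∑ i ∈ S x, (x/2) ^ (-s) := by
              apply Finset.sum_le_sum_of_subset_of_nonneg Finset.sdiff_subset
              intro i _ _; positivity
          _ = (x/2) ^ (-s) * (S x).card := by rw [Finset.sum_const, nsmul_eq_mul, mul_comm]
          _ ≤ _ := by gcongr; exact hb x hx1
      rw [hx2] at ih'
      have e3 : (x/2) ^ (-s) * (C * x) = C * (2 ^ s * x ^ (-δ)) := by rw [← hx3]; ring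
      have e4 : C * (2 ^ s * x ^ (-δ)) = B * (2 ^ δ - 1) * x ^ (-δ) := by rw [hBe]; ring
      linarith
  apply summable_of_sum_le (c := B * 2 ^ δ)
  · intro i; have := hn i; positivity
  · intro u
    obtain ⟨X, hX⟩ : ∃ X : ℝ, ∀ i ∈ u, nn i ≤ X := by
      obtain ⟨X, hX⟩ := (u.image nn).bddAbove
      exact ⟨X, fun i hi => hX (by simpa using ⟨i, hi, rfl⟩)⟩
    set Y := max X 1
    have hY : 1 ≤ Y := le_max_right _ _
    obtain ⟨n, hn'⟩ := pow_unbounded_of_one_lt Y (by norm_num : (1:ℝ) < 2)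
    have := key n Y (by linarith) hn'
    have h5 : ∑ i ∈ u, (nn i) ^ (-s) ≤ ∑ i ∈ S Y, (nn i) ^ (-s) := by
      apply Finset.sum_le_sum_of_subset_of_nonneg
      · intro i hi; rw [hS]; exact (hX i hi).trans (le_max_left _ _)
      · intro i _ _; have := hn i; positivity
    have : 0 ≤ B * Y ^ (-δ) := by positivity
    linarith

variable {P : Type*} {N : P → ℕ} {κ τ C : ℝ}

/-- primes of norm at most `x` -/
def PM (N : P → ℕ) (x : ℝ) : Finset P :=
  if h : {p : P | (N p : ℝ) ≤ x}.Finite then h.toFinset else ∅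

lemma SY.finP (H : SY N κ τ C) (x : ℝ) : {p : P | (N p : ℝ) ≤ x}.Finite := by
  have h1 := (H.fin x).preimage (f := fun p : P => Finsupp.single p 1)
    (Set.injOn_of_injective (Finsupp.single_left_injective one_ne_zero))
  convert h1 using 1
  ext p; simp [Nm_single]

lemma SY.memPM (H : SY N κ τ C) {x : ℝ} {p : P} : p ∈ PM N x ↔ (N p : ℝ) ≤ x := by
  unfold PM; rw [dif_pos (H.finP x)]; simp

lemma SY.N2 (H : SY N κ τ C) (p : P) : (2:ℝ) ≤ N p := by exact_mod_cast H.hN p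

lemma SY.I_le (H : SY N κ τ C) (x : ℝ) (hx : 1 ≤ x) : ((SM N x).card : ℝ) ≤ (κ + C) * x := by
  have h1 := (abs_le.1 (H.bd x (by linarith))).2
  have h2 : x ^ τ ≤ x := by
    conv_rhs => rw [← Real.rpow_one x]
    exact Real.rpow_le_rpow_of_exponent_le hx H.τ2.le
  have := mul_le_mul_of_nonneg_left h2 H.C0
  linarith

lemma SY.PM_card (H : SY N κ τ C) (x : ℝ) : (PM N x).card ≤ (SM N x).card := by
  apply Finset.card_le_card_of_injOn (fun p => Finsupp.single p 1)
  · intro p hp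
    have := H.memPM.1 hp
    simp only [Finset.mem_coe]
    rw [H.memSM, Nm_single, pow_one]; exact this
  · exact Set.injOn_of_injective (Finsupp.single_left_injective one_ne_zero)

lemma SY.UM_card (H : SY N κ τ C) (x : ℝ) : (UM N x).card ≤ (SM N x).card := by
  have := H.sum_UM_le x (fun _ => 1) (by simp)
  simp at this; exact this

lemma SY.sumM (H : SY N κ τ C) (s : ℝ) (hs : 1 < s) : Summable (fun m : P →₀ ℕ => (Nm N m : ℝ) ^ (-s)) :=
  dyad2 _ (SM N) (κ + C) s H.Nm1 (fun _ _ => H.memSM) H.I_le hs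

lemma SY.sumT (H : SY N κ τ C) (s : ℝ) (hs : 1 < s) : Summable (fun T : Finset P => (NT N T : ℝ) ^ (-s)) :=
  dyad2 _ (UM N) (κ + C) s H.NT1 (fun _ _ => H.memUM)
    (fun x hx => le_trans (by exact_mod_cast H.UM_card x) (H.I_le x hx)) hs

lemma SY.sumP (H : SY N κ τ C) (s : ℝ) (hs : 1 < s) : Summable (fun p : P => (N p : ℝ) ^ (-s)) :=
  dyad2 _ (PM N) (κ + C) s (fun p => by linarith [H.N2 p]) (fun _ _ => H.memPM)
    (fun x hx => le_trans (by exact_mod_cast H.PM_card x) (H.I_le x hx)) hs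

lemma SY.dyM (H : SY N κ τ C) (σ : ℝ) (h0 : 0 < σ) (h1 : σ < 1) :
    ∃ K, 0 ≤ K ∧ ∀ x : ℝ, 0 < x → ∑ m ∈ SM N x, (x / Nm N m) ^ σ ≤ K * x := by
  have := dyad (fun _ => 1) (fun m : P →₀ ℕ => (Nm N m : ℝ)) (SM N) (κ + C) σ (by simp) H.Nm1
    (fun _ _ => H.memSM) (by intro x hx; simpa using H.I_le x hx) h0 h1
  simpa using this

lemma SY.dyT (H : SY N κ τ C) (σ : ℝ) (h0 : 0 < σ) (h1 : σ < 1) :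
    ∃ K, 0 ≤ K ∧ ∀ x : ℝ, 0 < x → ∑ T ∈ UM N x, (x / NT N T) ^ σ ≤ K * x := by
  have := dyad (fun _ => 1) (fun T : Finset P => (NT N T : ℝ)) (UM N) (κ + C) σ (by simp) H.NT1
    (fun _ _ => H.memUM) (by
      intro x hx
      have h2 : ((UM N x).card : ℝ) ≤ (SM N x).card := by exact_mod_cast H.UM_card x
      simpa using h2.trans (H.I_le x hx)) h0 h1
  simpa using this

end

section

variable {P : Type*} {N : P → ℕ} {κ τ C : ℝ}

/-- number of elements of norm `n` -/
def rN (N : P → ℕ) (n : ℕ) : ℝ := ((SM N n).filter (fun m => Nm N m = n)).card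

lemma SY.sum_rN (H : SY N κ τ C) (x : ℝ) (g : ℝ → ℝ) :
    ∑ m ∈ SM N x, g (Nm N m) = ∑ k ∈ Finset.Icc 0 ⌊x⌋₊, g k * rN N k := by
  rw [← Finset.sum_fiberwise_of_maps_to (s := SM N x) (t := Finset.Icc 0 ⌊x⌋₊) (g := Nm N)]
  · apply Finset.sum_congr rfl
    intro k hk
    rw [Finset.mem_Icc] at hk
    have hx : (SM N x).filter (fun m => Nm N m = k) = (SM N k).filter (fun m => Nm N m = k) := by
      ext m
      rw [Finset.mem_filter, Finset.mem_filter, H.memSM, H.memSM]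
      constructor
      · rintro ⟨_, rfl⟩; exact ⟨le_rfl, rfl⟩
      · rintro ⟨_, rfl⟩
        refine ⟨?_, rfl⟩
        have h1 := Nm_pos H.hN m
        exact (Nat.le_floor_iff' (by omega)).1 hk.2
    rw [hx, rN, Finset.sum_congr rfl (g := fun _ => g k)]
    · rw [Finset.sum_const, nsmul_eq_mul, mul_comm]
    · intro m hm; rw [(Finset.mem_filter.1 hm).2]
  · intro m hm
    rw [H.memSM] at hm
    rw [Finset.mem_Icc]
    exact ⟨Nat.zero_le _, Nat.le_floor hm⟩

lemma SY.I_mono (H : SY N κ τ C) : Monotone (fun x : ℝ => ((SM N x).card : ℝ)) := by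
  intro x y hxy
  have := Finset.card_le_card (H.SM_mono hxy)
  simp only
  exact_mod_cast this

lemma SY.harm (H : SY N κ τ C) : ∃ γ K, 0 ≤ K ∧ ∀ y : ℝ, 1 ≤ y →
    |∑ m ∈ SM N y, 1 / (Nm N m : ℝ) - κ * Real.log y - γ| ≤ K * y ^ (τ - 1) := by
  set g : ℝ → ℝ := fun t => (((SM N t).card : ℝ) - κ * t) / t ^ 2 with hg
  have hmeas : Measurable g := by
    have := H.I_mono.measurable
    exact (this.sub (measurable_const.mul measurable_id)).div (measurable_id.pow_const 2)
  have hgb : ∀ t : ℝ, 0 < t → |g t| ≤ C * t ^ (τ - 2) := by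
    intro t ht
    rw [hg]; simp only
    rw [abs_div, abs_of_pos (by positivity : 0 < t ^ 2), div_le_iff₀ (by positivity), mul_assoc,
      ← Real.rpow_natCast t 2, ← Real.rpow_add ht]
    have e : τ - 2 + ((2:ℕ):ℝ) = τ := by push_cast; ring
    rw [e]; exact H.bd t ht
  have hτ := H.τ2
  have hri : ∀ y : ℝ, 1 ≤ y → MeasureTheory.IntegrableOn (fun t : ℝ => C * t ^ (τ - 2)) (Set.Ioi y) := by
    intro y hy
    exact (integrableOn_Ioi_rpow_of_lt (by linarith) (by linarith)).const_mul C
  have hgi : ∀ y : ℝ, 1 ≤ y → MeasureTheory.IntegrableOn g (Set.Ioi y) := by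
    intro y hy
    apply MeasureTheory.Integrable.mono' (hri y hy) hmeas.aestronglyMeasurable
    refine (MeasureTheory.ae_restrict_iff' measurableSet_Ioi).2 (MeasureTheory.ae_of_all _ fun t ht => ?_)
    rw [Real.norm_eq_abs]; exact hgb t (by have : y < t := ht; linarith)
  have htail : ∀ y : ℝ, 1 ≤ y → |∫ t in Set.Ioi y, g t| ≤ C / (1 - τ) * y ^ (τ - 1) := by
    intro y hy
    have h1 : |∫ t in Set.Ioi y, g t| ≤ ∫ t in Set.Ioi y, C * t ^ (τ - 2) := by
      rw [← Real.norm_eq_abs]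
      apply MeasureTheory.norm_integral_le_of_norm_le (hri y hy)
      refine (MeasureTheory.ae_restrict_iff' measurableSet_Ioi).2 (MeasureTheory.ae_of_all _ fun t ht => ?_)
      rw [Real.norm_eq_abs]; exact hgb t (by have : y < t := ht; linarith)
    rw [MeasureTheory.integral_const_mul, integral_Ioi_rpow_of_lt (by linarith) (by linarith)] at h1
    refine h1.trans (le_of_eq ?_)
    have e : τ - 2 + 1 = -(1 - τ) := by ring
    have e2 : τ - 1 = -(1 - τ) := by ring
    rw [e, e2, div_neg, neg_div]; ring
  refine ⟨κ + ∫ t in Set.Ioi 1, g t, C + C / (1 - τ), ?_, ?_⟩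
  · have := H.C0
    have : 0 ≤ C / (1 - τ) := div_nonneg this (by linarith)
    linarith
  intro y hy
  have hy0 : 0 < y := by linarith
  have hI : ∀ t : ℝ, ∑ k ∈ Finset.Icc 0 ⌊t⌋₊, rN N k = (SM N t).card := by
    intro t
    have := H.sum_rN t (fun _ => 1)
    simp at this; exact this.symm
  have hr0 : rN N 0 = 0 := by
    unfold rN
    rw [Nat.cast_zero, H.SM_empty (by norm_num)]; simp
  have h1 := H.sum_rN y (fun t => t⁻¹)
  have hne : ∀ t ∈ Set.Icc 1 y, t ≠ 0 := by intro t ht; have := ht.1; linarith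
  have h2 := sum_mul_eq_sub_integral_mul₀ (f := fun t : ℝ => t⁻¹) (rN N) hr0 y
    (by intro t ht; exact differentiableAt_inv (hne t ht))
    (by
      rw [deriv_inv']
      apply ContinuousOn.integrableOn_Icc
      apply ContinuousOn.neg
      apply ContinuousOn.inv₀ (by fun_prop)
      intro t ht; have := hne t ht; positivity)
  simp only [deriv_inv', hI] at h2
  have h3 : ∫ t in Set.Ioc 1 y, -(t ^ 2)⁻¹ * ((SM N t).card : ℝ)
      = - (κ * Real.log y + ((∫ t in Set.Ioi 1, g t) - ∫ t in Set.Ioi y, g t)) := by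
    have e1 : (∫ t in Set.Ioi 1, g t) - ∫ t in Set.Ioi y, g t = ∫ t in (1:ℝ)..y, g t := by
      rw [intervalIntegral.integral_Ioi_sub_Ioi (hgi 1 le_rfl) hy,
        intervalIntegral.integral_of_le hy]
    have e2 : κ * Real.log y = ∫ t in (1:ℝ)..y, κ * t⁻¹ := by
      rw [intervalIntegral.integral_const_mul, integral_inv_of_pos (by norm_num) hy0, div_one]
    have i1 : IntervalIntegrable g MeasureTheory.volume 1 y := by
      rw [intervalIntegrable_iff_integrableOn_Ioc_of_le hy]
      exact (hgi 1 le_rfl).mono_set Set.Ioc_subset_Ioi_self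
    have i2 : IntervalIntegrable (fun t : ℝ => κ * t⁻¹) MeasureTheory.volume 1 y := by
      apply ContinuousOn.intervalIntegrable
      rw [Set.uIcc_of_le hy]
      exact continuousOn_const.mul (continuousOn_inv₀.mono (fun t ht => hne t ht))
    rw [e1, e2, ← intervalIntegral.integral_add i2 i1, ← intervalIntegral.integral_neg,
      ← intervalIntegral.integral_of_le hy]
    apply intervalIntegral.integral_congr
    intro t ht
    rw [Set.uIcc_of_le hy] at ht
    have := hne t ht
    simp only [hg]
    field_simp
    ring
  have h4 : ∑ m ∈ SM N y, 1 / (Nm N m : ℝ) = y⁻¹ * (SM N y).card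
      + (κ * Real.log y + ((∫ t in Set.Ioi 1, g t) - ∫ t in Set.Ioi y, g t)) := by
    simp only [one_div]; rw [h1, h2, h3]; ring
  rw [h4]
  have h5 := htail y hy
  have h6 : |y⁻¹ * (SM N y).card - κ| ≤ C * y ^ (τ - 1) := by
    have : y⁻¹ * (SM N y).card - κ = (((SM N y).card : ℝ) - κ * y) / y := by field_simp
    rw [this, abs_div, abs_of_pos hy0, div_le_iff₀ hy0, mul_assoc]
    have e : y ^ (τ - 1) * y = y ^ τ := by
      rw [Real.rpow_sub hy0, Real.rpow_one]; field_simp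
    rw [e]; exact H.bd y hy0
  rw [abs_le] at h5 h6 ⊢
  constructor <;> linarith [h5.1, h5.2, h6.1, h6.2]

end

section

variable {P : Type*} {N : P → ℕ} {κ τ C : ℝ}

lemma e0_eq (V : Finset P) : ∑ T ∈ V.powerset, (-1:ℝ) ^ T.card = if V = ∅ then 1 else 0 := by
  have := Finset.sum_powerset_neg_one_pow_card (x := V)
  have h2 := congrArg (fun z : ℤ => (z : ℝ)) this
  push_cast at h2
  exact h2

lemma e1_insert (l : P → ℝ) (p : P) (V : Finset P) (hp : p ∉ V) :
    ∑ T ∈ (insert p V).powerset, (-1:ℝ) ^ T.card * ∑ q ∈ T, l q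
      = - (l p * if V = ∅ then 1 else 0) := by
  rw [Finset.sum_powerset_insert hp, ← e0_eq, Finset.mul_sum, ← Finset.sum_add_distrib,
    ← Finset.sum_neg_distrib]
  apply Finset.sum_congr rfl
  intro T hT
  have : p ∉ T := fun h => hp (Finset.mem_powerset.1 hT h)
  rw [Finset.sum_insert this, Finset.card_insert_of_notMem this]
  ring

lemma support_filter_one (n : P →₀ ℕ) : n.support.filter (fun p => 1 ≤ n p) = n.support := by
  ext p; simp [Nat.one_le_iff_ne_zero]

lemma SY.log_NT (H : SY N κ τ C) (T : Finset P) : Real.log (NT N T) = ∑ p ∈ T, Real.log (N p) := by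
  unfold NT
  push_cast
  rw [Real.log_prod]
  intro p _
  linarith [H.N2 p]

lemma SY.inner_log (H : SY N κ τ C) (x : ℝ) (hx : 1 ≤ x) (V : Finset P) :
    0 ≤ ∑ T ∈ V.powerset, (-1:ℝ) ^ T.card * Real.log (x / NT N T) ∧
    ∀ p, V = {p} → ∑ T ∈ V.powerset, (-1:ℝ) ^ T.card * Real.log (x / NT N T) = Real.log (N p) := by
  have h1 : ∑ T ∈ V.powerset, (-1:ℝ) ^ T.card * Real.log (x / NT N T)
      = Real.log x * (if V = ∅ then 1 else 0)
        - ∑ T ∈ V.powerset, (-1:ℝ) ^ T.card * ∑ q ∈ T, Real.log (N q) := by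
    rw [← e0_eq, Finset.mul_sum, ← Finset.sum_sub_distrib]
    apply Finset.sum_congr rfl
    intro T _
    have := H.NT1 T
    rw [Real.log_div (by linarith) (by linarith), H.log_NT]; ring
  rw [h1]
  have hlx := Real.log_nonneg hx
  constructor
  · rcases V.eq_empty_or_nonempty with rfl | hV
    · simp; exact hlx
    · obtain ⟨p, hp⟩ := hV
      rw [← Finset.insert_erase hp, e1_insert _ _ _ (Finset.notMem_erase _ _)]
      have : 0 ≤ Real.log (N p) := Real.log_nonneg (by linarith [H.N2 p])
      have h3 : (0:ℝ) ≤ if V.erase p = ∅ then 1 else 0 := by split_ifs <;> norm_num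
      simp only [Finset.insert_ne_empty, if_false]
      nlinarith [mul_nonneg this h3]
  · rintro p rfl
    have := e1_insert (fun q => Real.log (N q)) p ∅ (by simp)
    rw [insert_empty_eq] at this
    rw [this]; simp

lemma SY.support_card_one (H : SY N κ τ C) (x : ℝ) (hx : 1 ≤ x) (F : (P →₀ ℕ) → ℝ) :
    ∑ T ∈ UM N x, (-1:ℝ) ^ T.card * ∑ m ∈ SM N (x / (NT N T : ℝ)), F (m + ind 1 T) = F 0 := by
  have h1 := H.conv 1 le_rfl x F (fun T => (-1:ℝ) ^ T.card)
  simp only [support_filter_one, e0_eq, pow_one] at h1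
  rw [← h1, Finset.sum_eq_single 0]
  · simp
  · intro n _ hn; rw [if_neg]; simp; simpa using hn
  · intro h0; rw [H.memSM, Nm_zero] at h0; simp at h0; linarith

lemma SY.cheb (H : SY N κ τ C) : ∃ B, 0 ≤ B ∧ ∀ x : ℝ, 1 ≤ x → ∑ p ∈ PM N x, Real.log (N p) ≤ B * x := by
  obtain ⟨γ, K, hK0, hK⟩ := H.harm
  obtain ⟨K2, hK20, hK2⟩ := H.dyT τ (by linarith [H.τ1]) H.τ2
  have hκ := H.κpos
  have hC := H.C0
  set K' := C + K + |γ| / κ * C with hK'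
  have hK'0 : 0 ≤ K' := by positivity
  refine ⟨1 + |γ| / κ + K' * K2, by positivity, ?_⟩
  intro x hx
  have hx0 : 0 < x := by linarith
  -- step a
  have ha := H.conv 1 le_rfl x (fun _ => 1) (fun T => (-1:ℝ) ^ T.card * Real.log (x / NT N T))
  simp only [support_filter_one, one_mul, pow_one, Finset.sum_const, nsmul_eq_mul, mul_one] at ha
  have hb : ∑ p ∈ PM N x, Real.log (N p) ≤
      ∑ n ∈ SM N x, ∑ T ∈ n.support.powerset, (-1:ℝ) ^ T.card * Real.log (x / NT N T) := by
    have e : ∑ p ∈ PM N x, Real.log (N p) = ∑ n ∈ (PM N x).image (fun p => Finsupp.single p 1),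
        ∑ T ∈ n.support.powerset, (-1:ℝ) ^ T.card * Real.log (x / NT N T) := by
      rw [Finset.sum_image]
      · apply Finset.sum_congr rfl
        intro p _
        exact ((H.inner_log x hx _).2 p (by simp [Finsupp.support_single])).symm
      · exact Set.injOn_of_injective (Finsupp.single_left_injective one_ne_zero)
    rw [e]
    apply Finset.sum_le_sum_of_subset_of_nonneg
    · intro n hn
      obtain ⟨p, hp, rfl⟩ := Finset.mem_image.1 hn
      rw [H.memSM, Nm_single, pow_one]; exact H.memPM.1 hp
    · intro n _ _; exact (H.inner_log x hx _).1
  rw [ha] at hb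
  have hc := H.support_card_one x hx (fun n => x / Nm N n)
  have hd := H.support_card_one x hx (fun _ => 1)
  simp only [Nm_zero, Nat.cast_one, div_one, Finset.sum_const, nsmul_eq_mul, mul_one] at hc hd
  have he : ∑ T ∈ UM N x, (-1:ℝ) ^ T.card * Real.log (x / NT N T) * (SM N (x / NT N T)).card
      - (x - γ / κ * 1) ≤ K' * (K2 * x) := by
    have hcd := congrArg₂ (fun a b => a - γ / κ * b) hc hd
    rw [← hcd, Finset.mul_sum, ← Finset.sum_sub_distrib, ← Finset.sum_sub_distrib]
    calc _ ≤ ∑ T ∈ UM N x, K' * (x / NT N T) ^ τ := by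
          apply Finset.sum_le_sum
          intro T hT
          rw [H.memUM] at hT
          have hT1 := H.NT1 T
          set y := x / NT N T with hy
          have hy1 : 1 ≤ y := by rw [hy, le_div_iff₀ (by linarith)]; linarith
          have hy0 : 0 < y := by linarith
          have f1 : ∑ m ∈ SM N y, x / (Nm N (m + ind 1 T) : ℝ) = y * ∑ m ∈ SM N y, 1 / (Nm N m : ℝ) := by
            rw [Finset.mul_sum]
            apply Finset.sum_congr rfl
            intro m _
            have := H.Nm1 m
            rw [Nm_add, Nm_ind, pow_one, hy]; push_cast; field_simp
          rw [f1]
          set S := ∑ m ∈ SM N y, 1 / (Nm N m : ℝ)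
          set I : ℝ := ((SM N y).card : ℝ)
          have g1 := H.bd y hy0
          have g2 := H.bdl y hy1
          have g3 := hK y hy1
          have g4 : |y * S - κ * y * Real.log y - γ * y| ≤ K * y ^ τ := by
            have : y * S - κ * y * Real.log y - γ * y = y * (S - κ * Real.log y - γ) := by ring
            rw [this, abs_mul, abs_of_pos hy0]
            calc _ ≤ y * (K * y ^ (τ - 1)) := by gcongr
              _ = _ := by rw [Real.rpow_sub hy0, Real.rpow_one]; field_simp
          have g5 : |(I - κ * y) * Real.log y| ≤ C * y ^ τ := by
            rw [abs_mul, abs_of_nonneg (Real.log_nonneg hy1)]; exact g2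
          have g6 : |γ / κ * (I - κ * y)| ≤ |γ| / κ * C * y ^ τ := by
            rw [abs_mul, abs_div, abs_of_pos hκ, mul_assoc]
            gcongr
          have g7 : |I * Real.log y - (y * S - γ / κ * I)| ≤ K' * y ^ τ := by
            have : I * Real.log y - (y * S - γ / κ * I) = (I - κ * y) * Real.log y
                - (y * S - κ * y * Real.log y - γ * y) + γ / κ * (I - κ * y) := by
              field_simp; ring
            rw [this, hK', add_mul, add_mul]
            refine (abs_add_le _ _).trans ?_
            have := abs_sub ((I - κ * y) * Real.log y) (y * S - κ * y * Real.log y - γ * y)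
            linarith
          have g8 : (-1:ℝ) ^ T.card * Real.log y * I - ((-1) ^ T.card * (y * S)
              - γ / κ * ((-1) ^ T.card * I)) = (-1) ^ T.card * (I * Real.log y - (y * S - γ / κ * I)) := by
            ring
          rw [g8]
          refine (le_abs_self _).trans ?_
          rw [abs_mul, abs_pow, abs_neg, abs_one, one_pow, one_mul]
          exact g7
      _ = K' * ∑ T ∈ UM N x, (x / NT N T) ^ τ := by rw [Finset.mul_sum]
      _ ≤ _ := by gcongr; exact hK2 x hx0
  have hf : |γ / κ| * 1 ≤ |γ / κ| * x := by gcongr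
  rw [abs_div, abs_of_pos hκ] at hf
  have hg := neg_abs_le (γ / κ)
  rw [abs_div, abs_of_pos hκ] at hg
  nlinarith

end

section

variable {P : Type*} {N : P → ℕ} {κ τ C : ℝ}

lemma SY.I_le' (H : SY N κ τ C) (x : ℝ) (hx : 0 < x) : ((SM N x).card : ℝ) ≤ (κ + C) * x := by
  rcases lt_or_ge x 1 with h | h
  · rw [H.SM_empty h]; have := H.κpos; have := H.C0; simp; positivity
  · exact H.I_le x h

lemma single_one_le (p : P) (n : P →₀ ℕ) : Finsupp.single p 1 ≤ n ↔ 1 ≤ n p := by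
  rw [Finsupp.single_le_iff]

lemma SY.Tp_rec (H : SY N κ τ C) (p : P) (x : ℝ) :
    ∑ n ∈ SM N x, (n p : ℝ) = ∑ n ∈ SM N (x / N p), (n p : ℝ) + (SM N (x / N p)).card := by
  have h1 := H.shift x (Finsupp.single p 1) (fun n => (n p : ℝ))
  rw [Nm_single, pow_one] at h1
  have h2 : ∑ n ∈ SM N x, (n p : ℝ) = ∑ n ∈ (SM N x).filter (fun n => Finsupp.single p 1 ≤ n), (n p : ℝ) := by
    rw [Finset.sum_filter]
    apply Finset.sum_congr rfl
    intro n _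
    split_ifs with h
    · rfl
    · rw [single_one_le] at h
      have : n p = 0 := by omega
      simp [this]
  rw [h2, h1]
  simp [Finset.sum_add_distrib]

lemma SY.Tp_le (H : SY N κ τ C) (p : P) (x : ℝ) (hx : 0 < x) :
    ∑ n ∈ SM N x, (n p : ℝ) ≤ 2 * (κ + C) * x / N p := by
  have hκ := H.κpos
  have hC := H.C0
  have hp := H.N2 p
  have key : ∀ k : ℕ, ∀ x : ℝ, 0 < x → x < 2 ^ k → ∑ n ∈ SM N x, (n p : ℝ) ≤ 2 * (κ + C) * x / N p := by
    intro k
    induction k with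
    | zero =>
      intro x hx0 hx
      rw [H.SM_empty (by simpa using hx)]; simp; positivity
    | succ k ih =>
      intro x hx0 hx
      rw [H.Tp_rec p x]
      have hx2 : x / N p ≤ x / 2 := by gcongr
      have h1 := ih (x / N p) (by positivity) (by rw [pow_succ] at hx; linarith)
      have h2 := H.I_le' (x / N p) (by positivity)
      have h3 : 2 * (κ + C) * (x / N p) / N p ≤ 2 * (κ + C) * (x / N p) / 2 := by gcongr
      have h4 : 2 * (κ + C) * x / N p = 2 * (κ + C) * (x / N p) / 2 + (κ + C) * (x / N p) := by ring
      linarith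
  obtain ⟨k, hk⟩ := pow_unbounded_of_one_lt x (by norm_num : (1:ℝ) < 2)
  exact key k x hx hk

lemma SY.log_Nm (H : SY N κ τ C) (x : ℝ) (n : P →₀ ℕ) (hn : n ∈ SM N x) :
    Real.log (Nm N n) = ∑ p ∈ PM N x, Real.log (N p) * n p := by
  have hs : n.support ⊆ PM N x := by
    intro p hp
    rw [Finsupp.mem_support_iff] at hp
    rw [H.memPM]
    rw [H.memSM] at hn
    have h1 := Nm_mono H.hN ((single_one_le p n).2 (Nat.one_le_iff_ne_zero.2 hp))
    rw [Nm_single, pow_one] at h1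
    have : (N p : ℝ) ≤ Nm N n := by exact_mod_cast h1
    linarith
  rw [← Finset.sum_subset hs]
  · unfold Nm Finsupp.prod
    push_cast
    rw [Real.log_prod]
    · apply Finset.sum_congr rfl
      intro p _
      rw [Real.log_pow]; ring
    · intro p _; have := H.N2 p; positivity
  · intro p _ hp
    rw [Finsupp.notMem_support_iff] at hp
    simp [hp]

lemma SY.log_le_sqrt (H : SY N κ τ C) (p : P) : Real.log (N p) ≤ 2 * (N p : ℝ) ^ (1/2 : ℝ) := by
  have := Real.log_le_rpow_div (x := (N p : ℝ)) (by positivity) (by norm_num : (0:ℝ) < 1/2)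
  linarith

lemma SY.log_nn (H : SY N κ τ C) (p : P) : 0 ≤ Real.log (N p) := 
  Real.log_nonneg (by linarith [H.N2 p])

lemma SY.log_sq_le (H : SY N κ τ C) (p : P) : Real.log (N p) / (N p : ℝ) ^ 2 ≤ 2 * (N p : ℝ) ^ (-(3/2) : ℝ) := by
  have hp := H.N2 p
  rw [div_le_iff₀ (by positivity), mul_assoc, ← Real.rpow_natCast (N p : ℝ) 2, ← Real.rpow_add (by linarith)]
  have := H.log_le_sqrt p
  norm_num at this ⊢
  exact this

lemma SY.log_sq_sum (H : SY N κ τ C) : Summable (fun p => Real.log (N p) / (N p : ℝ) ^ 2) := by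
  refine Summable.of_nonneg_of_le ?_ H.log_sq_le ((H.sumP (3/2) (by norm_num)).mul_left 2)
  intro p; have := H.log_nn p; positivity

lemma SY.dyP (H : SY N κ τ C) (σ : ℝ) (h0 : 0 < σ) (h1 : σ < 1) :
    ∃ K, 0 ≤ K ∧ ∀ x : ℝ, 0 < x → ∑ p ∈ PM N x, Real.log (N p) * (x / N p) ^ σ ≤ K * x := by
  obtain ⟨B, hB0, hB⟩ := H.cheb
  exact dyad (fun p => Real.log (N p)) (fun p : P => (N p : ℝ)) (PM N) B σ H.log_nn
    (fun p => by linarith [H.N2 p]) (fun _ _ => H.memPM) hB h0 h1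

lemma SY.mertens1 (H : SY N κ τ C) : ∃ B, ∀ x : ℝ, 1 ≤ x →
    |∑ p ∈ PM N x, Real.log (N p) / N p - Real.log x| ≤ B := by
  have hκ := H.κpos
  have hC := H.C0
  obtain ⟨K3, hK30, hK3⟩ := H.dyP τ (by linarith [H.τ1]) H.τ2
  obtain ⟨K, hK0, hK⟩ := H.dyM (1/2) (by norm_num) (by norm_num)
  set Z := ∑' p, Real.log (N p) / (N p : ℝ) ^ 2 with hZ
  refine ⟨(C + 2 * K + 2 * (κ + C) * Z + C * K3) / κ, ?_⟩
  intro x hx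
  have hx0 : 0 < x := by linarith
  have h1 : ∑ n ∈ SM N x, Real.log (Nm N n) = ∑ p ∈ PM N x, Real.log (N p) * ∑ n ∈ SM N x, (n p : ℝ) := by
    rw [Finset.sum_congr rfl (H.log_Nm x), Finset.sum_comm]
    simp only [Finset.mul_sum]
  have h2 : ∑ n ∈ SM N x, Real.log (Nm N n) = (SM N x).card * Real.log x
      - ∑ n ∈ SM N x, Real.log (x / Nm N n) := by
    rw [← nsmul_eq_mul, ← Finset.sum_const, ← Finset.sum_sub_distrib]
    apply Finset.sum_congr rfl
    intro n _
    have := H.Nm1 n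
    rw [Real.log_div (by linarith) (by linarith)]; ring
  have h3 : ∑ n ∈ SM N x, Real.log (x / Nm N n) ≤ 2 * (K * x) := by
    refine le_trans ?_ (mul_le_mul_of_nonneg_left (hK x hx0) (by norm_num : (0:ℝ) ≤ 2))
    rw [Finset.mul_sum]
    apply Finset.sum_le_sum
    intro n _
    have h5 := H.Nm1 n
    have := Real.log_le_rpow_div (x := x / Nm N n) (by positivity) (by norm_num : (0:ℝ) < 1/2)
    linarith
  have h4 : 0 ≤ ∑ n ∈ SM N x, Real.log (x / Nm N n) := by
    apply Finset.sum_nonneg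
    intro n hn
    rw [H.memSM] at hn
    have h5 := H.Nm1 n
    apply Real.log_nonneg
    rw [le_div_iff₀ (by linarith)]; linarith
  have h5 : |(SM N x).card * Real.log x - κ * x * Real.log x| ≤ C * x := by
    have : (SM N x).card * Real.log x - κ * x * Real.log x = ((SM N x).card - κ * x) * Real.log x := by ring
    rw [this, abs_mul, abs_of_nonneg (Real.log_nonneg hx)]
    refine (H.bdl x hx).trans ?_
    gcongr
    conv_rhs => rw [← Real.rpow_one x]
    exact Real.rpow_le_rpow_of_exponent_le hx H.τ2.le
  have h6 : |∑ p ∈ PM N x, Real.log (N p) * ∑ n ∈ SM N x, (n p : ℝ)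
      - κ * x * ∑ p ∈ PM N x, Real.log (N p) / N p| ≤ 2 * (κ + C) * x * Z + C * (K3 * x) := by
    rw [Finset.mul_sum, ← Finset.sum_sub_distrib]
    refine (Finset.abs_sum_le_sum_abs _ _).trans ?_
    calc _ ≤ ∑ p ∈ PM N x, (2 * (κ + C) * x * (Real.log (N p) / (N p : ℝ) ^ 2)
          + C * (Real.log (N p) * (x / N p) ^ τ)) := by
          apply Finset.sum_le_sum
          intro p _
          have hp := H.N2 p
          have hl := H.log_nn p
          have hxp : 0 < x / N p := by positivity
          rw [H.Tp_rec p x]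
          have g1 := H.Tp_le p (x / N p) hxp
          have g0 : 0 ≤ ∑ n ∈ SM N (x / N p), (n p : ℝ) := Finset.sum_nonneg (fun _ _ => by positivity)
          have g2 := H.bd _ hxp
          have e : Real.log (N p) * (∑ n ∈ SM N (x / N p), (n p : ℝ) + (SM N (x / N p)).card)
              - κ * x * (Real.log (N p) / N p) = Real.log (N p) * (∑ n ∈ SM N (x / N p), (n p : ℝ)
                + ((SM N (x / N p)).card - κ * (x / N p))) := by ring
          rw [e, abs_mul, abs_of_nonneg hl]
          have g3 : |∑ n ∈ SM N (x / N p), (n p : ℝ) + ((SM N (x / N p)).card - κ * (x / N p))|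
              ≤ 2 * (κ + C) * (x / N p) / N p + C * (x / N p) ^ τ := by
            refine (abs_add_le _ _).trans ?_
            rw [abs_of_nonneg g0]; linarith
          calc _ ≤ Real.log (N p) * (2 * (κ + C) * (x / N p) / N p + C * (x / N p) ^ τ) := by gcongr
            _ = _ := by ring
      _ = 2 * (κ + C) * x * ∑ p ∈ PM N x, Real.log (N p) / (N p : ℝ) ^ 2
          + C * ∑ p ∈ PM N x, Real.log (N p) * (x / N p) ^ τ := by
          rw [Finset.sum_add_distrib, Finset.mul_sum, Finset.mul_sum]
      _ ≤ _ := by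
          gcongr
          · exact H.log_sq_sum.sum_le_tsum _ (fun p _ => by have := H.log_nn p; positivity)
          · exact hK3 x hx0
  rw [← h1, h2] at h6
  set S := ∑ p ∈ PM N x, Real.log (N p) / N p
  set L := ∑ n ∈ SM N x, Real.log (x / Nm N n)
  rw [le_div_iff₀ hκ]
  have h7 : |S - Real.log x| * κ * x ≤ (C + 2 * K + 2 * (κ + C) * Z + C * K3) * x := by
    have : |S - Real.log x| * κ * x = |κ * x * S - κ * x * Real.log x| := by
      have : κ * x * S - κ * x * Real.log x = (S - Real.log x) * (κ * x) := by ring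
      rw [this, abs_mul, abs_of_pos (by positivity : 0 < κ * x)]; ring
    rw [this]
    rw [abs_le] at h5 h6 ⊢
    constructor <;> nlinarith [h5.1, h5.2, h6.1, h6.2]
  exact le_of_mul_le_mul_right h7 hx0

end

section

variable {P : Type*} {N : P → ℕ} {κ τ C : ℝ}

def cnt (N : P → ℕ) (R : (P →₀ ℕ) → Prop) (y : ℝ) : ℝ := ((SM N y).filter R).card

def alp (N : P → ℕ) (h : ℕ) (p : P) : ℝ := ((N p : ℝ) ^ (h - 1) - 1) / ((N p : ℝ) ^ h - 1)

lemma cnt_congr (N : P → ℕ) {R S : (P →₀ ℕ) → Prop} (h : ∀ m, R m ↔ S m) (y : ℝ) : cnt N R y = cnt N S y := by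
  have : R = S := funext fun m => propext (h m)
  rw [this]

lemma cnt_split (N : P → ℕ) (R S : (P →₀ ℕ) → Prop) (y : ℝ) :
    cnt N R y = cnt N (fun m => R m ∧ S m) y + cnt N (fun m => R m ∧ ¬ S m) y := by
  unfold cnt
  rw [← Nat.cast_add, ← Finset.card_filter_add_card_filter_not (s := (SM N y).filter R) S,
    Finset.filter_filter, Finset.filter_filter]
  congr!

lemma SY.cnt_shift (H : SY N κ τ C) (R : (P →₀ ℕ) → Prop) (d : P →₀ ℕ) (y : ℝ) (hR : ∀ m, R m → d ≤ m) :
    cnt N R y = cnt N (fun m => R (m + d)) (y / Nm N d) := by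
  unfold cnt
  rw [Finset.card_filter, Finset.card_filter]
  congr 1
  rw [← H.shift y d (fun n => if R n then 1 else 0), Finset.sum_filter]
  apply Finset.sum_congr rfl
  intro n _
  by_cases h1 : R n
  · rw [if_pos h1, if_pos (hR n h1)]
  · rw [if_neg h1]; simp

lemma SY.cnt_low (H : SY N κ τ C) (R : (P →₀ ℕ) → Prop) (y : ℝ) (hy : y < 1) : cnt N R y = 0 := by
  unfold cnt; rw [H.SM_empty hy]; simp

section
variable (A : (P →₀ ℕ) → Prop) (p : P) (h : ℕ)

lemma SY.A1_eq (H : SY N κ τ C) (hh : 2 ≤ h) (hA : ∀ m k, A (m + Finsupp.single p k) ↔ A m) (y : ℝ) :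
    cnt N (fun m => A m ∧ m p < h ∧ 1 ≤ m p) y
      = cnt N (fun m => A m ∧ m p < h) (y / N p) - cnt N (fun m => A m ∧ m p = 0) (y / (N p : ℝ) ^ h) := by
  have h1 := cnt_split N (fun m => A m ∧ m p ≤ h ∧ 1 ≤ m p) (fun m => m p < h) y
  have h2 := H.cnt_shift (fun m => A m ∧ m p ≤ h ∧ 1 ≤ m p) (Finsupp.single p 1) y
    (by intro m hm; rw [single_one_le]; exact hm.2.2)
  have h3 := H.cnt_shift (fun m => (A m ∧ m p ≤ h ∧ 1 ≤ m p) ∧ ¬ (m p < h)) (Finsupp.single p h) y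
    (by intro m hm; rw [Finsupp.single_le_iff]; omega)
  rw [Nm_single] at h2 h3
  rw [Nat.cast_pow] at h2 h3
  rw [pow_one] at h2
  have e1 := cnt_congr N (R := fun m : P →₀ ℕ => A (m + Finsupp.single p (1:ℕ)) ∧ (m + Finsupp.single p (1:ℕ)) p ≤ h ∧
    1 ≤ (m + Finsupp.single p (1:ℕ)) p) (S := fun m => A m ∧ m p < h) (by
      intro m; rw [hA]; simp [Nat.succ_le_iff]) (y / N p)
  have e2 := cnt_congr N (R := fun m : P →₀ ℕ => (A (m + Finsupp.single p h) ∧ (m + Finsupp.single p h) p ≤ h ∧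
    1 ≤ (m + Finsupp.single p h) p) ∧ ¬ ((m + Finsupp.single p h) p < h)) (S := fun m => A m ∧ m p = 0) (by
      intro m; rw [hA]; simp; intro _ _; omega) (y / (N p : ℝ) ^ h)
  have e3 := cnt_congr N (R := fun m => (A m ∧ m p ≤ h ∧ 1 ≤ m p) ∧ m p < h)
    (S := fun m => A m ∧ m p < h ∧ 1 ≤ m p) (by
      intro m; constructor
      · rintro ⟨⟨a, b, c⟩, d⟩; exact ⟨a, d, c⟩
      · rintro ⟨a, d, c⟩; exact ⟨⟨a, d.le, c⟩, d⟩) y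
  linarith

lemma SY.A0_eq (H : SY N κ τ C) (hh : 2 ≤ h) (hA : ∀ m k, A (m + Finsupp.single p k) ↔ A m) (y : ℝ) :
    cnt N (fun m => A m ∧ m p = 0) y = cnt N (fun m => A m ∧ m p < h) y
      - cnt N (fun m => A m ∧ m p < h) (y / N p) + cnt N (fun m => A m ∧ m p = 0) (y / (N p : ℝ) ^ h) := by
  have h0 := H.A1_eq A p h hh hA y
  have h1 := cnt_split N (fun m => A m ∧ m p < h) (fun m => 1 ≤ m p) y
  have e1 := cnt_congr N (R := fun m => (A m ∧ m p < h) ∧ 1 ≤ m p)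
    (S := fun m => A m ∧ m p < h ∧ 1 ≤ m p) (by intro m; tauto) y
  have e2 := cnt_congr N (R := fun m => (A m ∧ m p < h) ∧ ¬ 1 ≤ m p)
    (S := fun m => A m ∧ m p = 0) (by
      intro m; constructor
      · rintro ⟨⟨a, b⟩, c⟩; exact ⟨a, by omega⟩
      · rintro ⟨a, b⟩; exact ⟨⟨a, by omega⟩, by omega⟩) y
  linarith

lemma SY.lemL (H : SY N κ τ C) (hh : 2 ≤ h) (hA : ∀ m k, A (m + Finsupp.single p k) ↔ A m)
    (a D : ℝ) (hD : ∀ y : ℝ, 0 < y → |cnt N (fun m => A m ∧ m p < h) y - a * y| ≤ D * y ^ τ)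
    (y : ℝ) (hy : 0 < y) :
    |cnt N (fun m => A m ∧ m p < h ∧ 1 ≤ m p) y - a * alp N h p * y| ≤ 5 * D * (y / N p) ^ τ := by
  have hτ := H.τ1
  have hq := H.N2 p
  have hD0 : 0 ≤ D := by
    have := (abs_nonneg _).trans (hD 1 one_pos)
    rwa [Real.one_rpow, mul_one] at this
  set q : ℝ := (N p : ℝ) with hqd
  have hqh : q ^ 2 ≤ q ^ h := pow_le_pow_right₀ (by linarith) hh
  have hqh4 : 4 ≤ q ^ h := by nlinarith
  set u : ℝ := (1 - 1 / q) / (1 - 1 / q ^ h) with hu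
  have hd1 : 0 < 1 - 1 / q ^ h := by
    rw [sub_pos, div_lt_one (by linarith)]; linarith
  have hu0 : 0 ≤ u := by
    apply div_nonneg _ hd1.le
    rw [sub_nonneg, div_le_one (by linarith)]; linarith
  have hu1 : u ≤ 1 := by
    rw [hu, div_le_one hd1]
    have : 1 / q ^ h ≤ 1 / q := by
      apply one_div_le_one_div_of_le (by linarith); nlinarith
    linarith
  have hue : u = 1 - 1 / q + u / q ^ h := by
    have : u * (1 - 1 / q ^ h) = 1 - 1 / q := by rw [hu, div_mul_cancel₀ _ hd1.ne']
    linear_combination this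
  have key : ∀ k : ℕ, ∀ y : ℝ, 0 < y → y < 2 ^ k →
      |cnt N (fun m => A m ∧ m p = 0) y - a * u * y| ≤ 4 * D * y ^ τ := by
    have low : ∀ y : ℝ, 0 < y → y < 1 → |cnt N (fun m => A m ∧ m p = 0) y - a * u * y| ≤ 4 * D * y ^ τ := by
      intro y hy0 hy1
      have h1 := hD y hy0
      rw [H.cnt_low _ _ hy1, zero_sub, abs_neg] at h1 ⊢
      have : a * u * y = u * (a * y) := by ring
      rw [this, abs_mul, abs_of_nonneg hu0]
      have h2 : u * |a * y| ≤ 1 * |a * y| := by gcongr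
      have : 0 ≤ D * y ^ τ := by positivity
      linarith
    intro k
    induction k with
    | zero => intro y hy0 hy1; exact low y hy0 (by simpa using hy1)
    | succ k ih =>
      intro y hy0 hy1
      rcases lt_or_ge y 1 with h | hy1'
      · exact low y hy0 h
      have hyq : y / q ^ h ≤ y / 4 := by gcongr
      have i1 := ih (y / q ^ h) (by positivity) (by rw [pow_succ] at hy1; linarith)
      have i2 := hD y hy0
      have i3 := hD (y / q) (by positivity)
      have i4 : (y / q) ^ τ ≤ y ^ τ := by
        apply Real.rpow_le_rpow (by positivity) _ (by linarith)
        exact div_le_self hy0.le (by linarith)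
      have i5 : (y / q ^ h) ^ τ ≤ y ^ τ / 2 := by
        calc (y / q ^ h) ^ τ ≤ (y / 4) ^ τ := by gcongr
          _ = y ^ τ / 4 ^ τ := by rw [Real.div_rpow hy0.le (by norm_num)]
          _ ≤ y ^ τ / 2 := by
            gcongr
            calc (2:ℝ) = 4 ^ (1/2 : ℝ) := by
                  rw [← Real.sqrt_eq_rpow, show (4:ℝ) = 2 ^ 2 by norm_num, Real.sqrt_sq (by norm_num)]
              _ ≤ 4 ^ τ := Real.rpow_le_rpow_of_exponent_le (by norm_num) (by linarith)
      rw [H.A0_eq A p h hh hA y]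
      set X1 := cnt N (fun m => A m ∧ m p < h) y
      set X2 := cnt N (fun m => A m ∧ m p < h) (y / N p)
      set X3 := cnt N (fun m => A m ∧ m p = 0) (y / (N p : ℝ) ^ h)
      have e : X1 - X2 + X3 - a * u * y = (X1 - a * y) - (X2 - a * (y / q)) + (X3 - a * u * (y / q ^ h)) := by
        linear_combination (-(a * y)) * hue
      rw [e]
      have j1 : D * (y / q) ^ τ ≤ D * y ^ τ := by gcongr
      have j2 : 4 * D * (y / q ^ h) ^ τ ≤ 4 * D * (y ^ τ / 2) := by gcongr
      have j3 := abs_add_le ((X1 - a * y) - (X2 - a * (y / q))) (X3 - a * u * (y / q ^ h))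
      have j4 := abs_sub (X1 - a * y) (X2 - a * (y / q))
      linarith
  obtain ⟨k, hk⟩ := pow_unbounded_of_one_lt (y / q ^ h) (by norm_num : (1:ℝ) < 2)
  have k1 := key k (y / q ^ h) (by positivity) hk
  have k2 := hD (y / q) (by positivity)
  have k3 : (y / q ^ h) ^ τ ≤ (y / q) ^ τ := by
    gcongr
    nlinarith
  rw [H.A1_eq A p h hh hA y]
  have hal : alp N h p = 1 / q - u / q ^ h := by
    unfold alp
    rw [hu, ← hqd]
    obtain ⟨j, rfl⟩ : ∃ j, h = j + 1 := ⟨h - 1, by omega⟩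
    have : q ^ (j + 1) - 1 ≠ 0 := by linarith
    have h0 : q ≠ 0 := by linarith
    have h1 : q ^ (j+1) ≠ 0 := by positivity
    rw [show (1 - 1 / q ^ (j+1)) = (q ^ (j+1) - 1) / q ^ (j+1) by field_simp]
    simp only [Nat.add_sub_cancel]
    field_simp
    ring
  set X2 := cnt N (fun m => A m ∧ m p < h) (y / N p)
  set X3 := cnt N (fun m => A m ∧ m p = 0) (y / (N p : ℝ) ^ h)
  have e : X2 - X3 - a * alp N h p * y = (X2 - a * (y / q)) - (X3 - a * u * (y / q ^ h)) := by
    rw [hal]; ring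
  rw [e]
  have j4 := abs_sub (X2 - a * (y / q)) (X3 - a * u * (y / q ^ h))
  have j2 : 4 * D * (y / q ^ h) ^ τ ≤ 4 * D * (y / q) ^ τ := by gcongr
  linarith
end

end

section

variable {P : Type*} {N : P → ℕ} {κ τ C : ℝ}

lemma HFree_iff (h : ℕ) (hh : 1 ≤ h) (m : P →₀ ℕ) :
    HFree h m ↔ m.support.filter (fun p => h ≤ m p) = ∅ := by
  unfold HFree
  rw [Finset.filter_eq_empty_iff]
  constructor
  · intro H p _; have := H p; omega
  · intro H p
    by_contra hc
    have := @H p (by rw [Finsupp.mem_support_iff]; omega)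
    omega

lemma SY.sumTh (H : SY N κ τ C) (h : ℕ) (hh : 2 ≤ h) :
    Summable (fun T : Finset P => (-1:ℝ) ^ T.card / (NT N T : ℝ) ^ h) := by
  have hs := H.sumT (h : ℝ) (by have : (2:ℝ) ≤ h := by exact_mod_cast hh
                                linarith)
  apply Summable.of_norm
  refine hs.congr ?_
  intro T
  have := H.NT1 T
  rw [norm_div, norm_pow, norm_neg, norm_one, one_pow, Real.norm_of_nonneg (by positivity),
    Real.rpow_neg (by linarith), Real.rpow_natCast, one_div]

lemma SY.zeta_inv (H : SY N κ τ C) (h : ℕ) (hh : 2 ≤ h) :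
    (∑' T : Finset P, (-1:ℝ) ^ T.card / (NT N T : ℝ) ^ h) * zetaM N h = 1 := by
  have hh2 : (2:ℝ) ≤ h := by exact_mod_cast hh
  have hz : zetaM N h = ∑' m : P →₀ ℕ, 1 / (Nm N m : ℝ) ^ h := by
    unfold zetaM; simp only [Real.rpow_natCast]
  have hsM : Summable (fun m : P →₀ ℕ => 1 / (Nm N m : ℝ) ^ h) := by
    refine (H.sumM (h : ℝ) (by linarith)).congr ?_
    intro m
    rw [Real.rpow_neg (by positivity), Real.rpow_natCast, one_div]
  set Z := zetaM N h
  set f : ℝ → Finset P → ℝ := fun x T => (-1:ℝ) ^ T.card / (NT N T : ℝ) ^ h *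
    ∑ m ∈ SM N (x / NT N T), 1 / (Nm N m : ℝ) ^ h with hf
  have h1 : ∀ x : ℝ, 1 ≤ x → ∑' T, f x T = 1 := by
    intro x hx
    rw [tsum_eq_sum (s := UM N x)]
    · have := H.support_card_one x hx (fun m => 1 / (Nm N m : ℝ) ^ h)
      simp only [Nm_zero, Nat.cast_one, one_pow, div_one] at this
      rw [← this]
      apply Finset.sum_congr rfl
      intro T _
      simp only [hf]
      rw [div_mul_eq_mul_div, mul_div_assoc, Finset.sum_div]
      congr 1
      apply Finset.sum_congr rfl
      intro m _
      rw [Nm_add, Nm_ind, pow_one]; push_cast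
      rw [mul_pow, div_div]
    · intro T hT
      rw [H.memUM, not_le] at hT
      have := H.NT1 T
      simp only [hf]
      rw [H.SM_empty (by rw [div_lt_one (by linarith)]; exact hT)]; simp
  have hlim : ∀ T, Tendsto (fun x => f x T) atTop (𝓝 ((-1:ℝ) ^ T.card / (NT N T : ℝ) ^ h * Z)) := by
    intro T
    apply Tendsto.const_mul
    rw [hz]
    have hT := H.NT1 T
    have t1 : Tendsto (fun x : ℝ => SM N (x / NT N T)) atTop atTop := by
      apply tendsto_atTop_finset_of_monotone
      · intro x y hxy
        apply H.SM_mono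
        gcongr
      · intro m
        refine ⟨Nm N m * NT N T, ?_⟩
        rw [H.memSM, mul_div_cancel_right₀ _ (by linarith)]
    exact hsM.hasSum.comp t1
  have hdom := tendsto_tsum_of_dominated_convergence (f := f) (𝓕 := atTop)
    (bound := fun T => ‖(-1:ℝ) ^ T.card / (NT N T : ℝ) ^ h‖ * Z)
    ((H.sumTh h hh).norm.mul_right Z) hlim (by
      filter_upwards with x T
      simp only [hf]
      rw [norm_mul]
      gcongr
      rw [Real.norm_of_nonneg (Finset.sum_nonneg (fun _ _ => by positivity)), hz]
      exact hsM.sum_le_tsum _ (fun _ _ => by positivity))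
  rw [tsum_mul_right] at hdom
  refine tendsto_nhds_unique hdom (Tendsto.congr' ?_ tendsto_const_nhds)
  filter_upwards [eventually_ge_atTop 1] with x hx
  exact (h1 x hx).symm

lemma SY.hfree_count (H : SY N κ τ C) (h : ℕ) (hh : 2 ≤ h) :
    ∃ D, ∀ y : ℝ, 0 < y → |cnt N (HFree h) y - κ / zetaM N h * y| ≤ D * y ^ τ := by
  have hh2 : (2:ℝ) ≤ h := by exact_mod_cast hh
  have hτ := H.τ1
  have hs2 := H.sumT (h * τ) (by nlinarith)
  refine ⟨C * ∑' T : Finset P, (NT N T : ℝ) ^ (-(h * τ)), ?_⟩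
  intro y hy
  have hz := H.zeta_inv h hh
  have hz0 : zetaM N h ≠ 0 := by intro h0; rw [h0] at hz; simp at hz
  have hc : κ / zetaM N h * y = ∑' T : Finset P, (-1:ℝ) ^ T.card / (NT N T : ℝ) ^ h * (κ * y) := by
    rw [tsum_mul_right]
    have : (∑' T : Finset P, (-1:ℝ) ^ T.card / (NT N T : ℝ) ^ h) = 1 / zetaM N h := by
      rw [eq_div_iff hz0]; exact hz
    rw [this]; ring
  have hq : cnt N (HFree h) y = ∑ T ∈ UM N y, (-1:ℝ) ^ T.card * (SM N (y / (NT N T : ℝ) ^ h)).card := by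
    have := H.conv h (by omega) y (fun _ => 1) (fun T => (-1:ℝ) ^ T.card)
    simp only [e0_eq, one_mul, Finset.sum_const, nsmul_eq_mul, mul_one] at this
    rw [← this]
    unfold cnt
    rw [Finset.card_filter]
    push_cast
    apply Finset.sum_congr rfl
    intro m _
    simp only [HFree_iff h (by omega) m]
  have hvan : ∀ T, T ∉ UM N y → (-1:ℝ) ^ T.card * (SM N (y / (NT N T : ℝ) ^ h)).card = 0 := by
    intro T hT
    rw [H.memUM, not_le] at hT
    have h1 := H.NT1 T
    have h2 : (NT N T : ℝ) ≤ (NT N T : ℝ) ^ h := le_self_pow₀ h1 (by omega)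
    rw [H.SM_empty (by rw [div_lt_one (by linarith)]; linarith)]; simp
  have hsA : Summable (fun T : Finset P => (-1:ℝ) ^ T.card * ((SM N (y / (NT N T : ℝ) ^ h)).card : ℝ)) :=
    summable_of_ne_finset_zero (s := UM N y) hvan
  have hq2 : cnt N (HFree h) y = ∑' T : Finset P, (-1:ℝ) ^ T.card * ((SM N (y / (NT N T : ℝ) ^ h)).card : ℝ) := by
    rw [hq]; exact (tsum_eq_sum hvan).symm
  rw [hq2, hc, ← hsA.tsum_sub ((H.sumTh h hh).mul_right (κ * y)), mul_assoc, mul_comm (tsum _) (y ^ τ),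
    ← mul_assoc, ← tsum_mul_left, ← Real.norm_eq_abs]
  apply tsum_of_norm_bounded (hs2.mul_left (C * y ^ τ)).hasSum
  intro T
  have h1 := H.NT1 T
  have hp : 0 < y / (NT N T : ℝ) ^ h := by positivity
  have e : (-1:ℝ) ^ T.card * ((SM N (y / (NT N T : ℝ) ^ h)).card : ℝ) - (-1:ℝ) ^ T.card / (NT N T : ℝ) ^ h * (κ * y)
      = (-1:ℝ) ^ T.card * ((SM N (y / (NT N T : ℝ) ^ h)).card - κ * (y / (NT N T : ℝ) ^ h)) := by ring
  rw [e, norm_mul, norm_pow, norm_neg, norm_one, one_pow, one_mul, Real.norm_eq_abs]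
  refine (H.bd _ hp).trans (le_of_eq ?_)
  rw [Real.div_rpow hy.le (by positivity), ← Real.rpow_natCast (NT N T : ℝ) h, ← Real.rpow_mul (by linarith),
    Real.rpow_neg (by linarith)]
  ring

lemma HFree_add_single (p : P) (h : ℕ) (hh : 2 ≤ h) (m : P →₀ ℕ) :
    HFree h m ↔ (∀ q, q ≠ p → m q ≤ h - 1) ∧ m p < h := by
  unfold HFree
  constructor
  · intro H; exact ⟨fun q _ => H q, by have := H p; omega⟩
  · rintro ⟨h1, h2⟩ q
    by_cases hq : q = p
    · subst hq; omega
    · exact h1 q hq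

lemma SY.D_count (H : SY N κ τ C) (h : ℕ) (hh : 2 ≤ h) :
    ∃ D, 0 ≤ D ∧ (∀ p, ∀ y : ℝ, 0 < y →
      |cnt N (fun m => HFree h m ∧ 1 ≤ m p) y - κ / zetaM N h * alp N h p * y| ≤ D * (y / N p) ^ τ) ∧
      (∀ p q, p ≠ q → ∀ y : ℝ, 0 < y →
      |cnt N (fun m => HFree h m ∧ 1 ≤ m p ∧ 1 ≤ m q) y - κ / zetaM N h * (alp N h p * alp N h q) * y|
        ≤ D * (y / (N p * N q)) ^ τ) := by
  obtain ⟨D, hD⟩ := H.hfree_count h hh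
  have hD0 : 0 ≤ D := by
    have := (abs_nonneg _).trans (hD 1 one_pos)
    rwa [Real.one_rpow, mul_one] at this
  have hadd : ∀ (p q : P), q ≠ p → ∀ (m : P →₀ ℕ) (k : ℕ), (m + Finsupp.single p k) q = m q := by
    intro p q hq m k
    simp [Finsupp.single_apply, hq.symm]
  have s1 : ∀ p, ∀ y : ℝ, 0 < y →
      |cnt N (fun m => HFree h m ∧ 1 ≤ m p) y - κ / zetaM N h * alp N h p * y| ≤ 5 * D * (y / N p) ^ τ := by
    intro p y hy
    have := H.lemL (fun m => ∀ q, q ≠ p → m q ≤ h - 1) p h hh (by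
      intro m k
      constructor
      · intro h1 q hq; have := h1 q hq; rwa [hadd p q hq] at this
      · intro h1 q hq; rw [hadd p q hq]; exact h1 q hq) (κ / zetaM N h) D (by
      intro y hy
      rw [cnt_congr N (S := HFree h) (fun m => (HFree_add_single p h hh m).symm)]
      exact hD y hy) y hy
    rwa [cnt_congr N (S := fun m => HFree h m ∧ 1 ≤ m p) (fun m => by
      rw [HFree_add_single p h hh m]; tauto)] at this
  refine ⟨25 * D, by positivity, ?_, ?_⟩
  · intro p y hy
    refine (s1 p y hy).trans ?_
    have := H.N2 p
    gcongr; norm_num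
  · intro p q hpq y hy
    have hp := H.N2 p
    have hq' := H.N2 q
    have := H.lemL (fun m => (∀ r, r ≠ q → m r ≤ h - 1) ∧ 1 ≤ m p) q h hh (by
      intro m k
      rw [hadd q p hpq]
      apply and_congr_left'
      constructor
      · intro h1 r hr; have := h1 r hr; rwa [hadd q r hr] at this
      · intro h1 r hr; rw [hadd q r hr]; exact h1 r hr) (κ / zetaM N h * alp N h p)
      (5 * D / (N p : ℝ) ^ τ) (by
      intro y hy
      rw [cnt_congr N (S := fun m => HFree h m ∧ 1 ≤ m p) (fun m => by
        rw [HFree_add_single q h hh m]; tauto)]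
      refine (s1 p y hy).trans (le_of_eq ?_)
      rw [Real.div_rpow hy.le (by positivity)]; ring) y hy
    rw [cnt_congr N (S := fun m => HFree h m ∧ 1 ≤ m p ∧ 1 ≤ m q) (fun m => by
        rw [HFree_add_single q h hh m]; tauto), mul_assoc (κ / zetaM N h)] at this
    refine this.trans (le_of_eq ?_)
    have e : y / (N p * N q) = (y / N q) / N p := by field_simp
    rw [e, Real.div_rpow (by positivity : 0 ≤ y / (N q : ℝ)) (by positivity)]; ring

end

section

variable {P : Type*} {N : P → ℕ} {κ τ C : ℝ}

lemma alp_core (q : ℝ) (hq : 2 ≤ q) (h : ℕ) (hh : 2 ≤ h) :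
    1 / q - (q ^ (h-1) - 1) / (q ^ h - 1) = (q - 1) / (q * (q ^ h - 1)) ∧
    0 ≤ (q - 1) / (q * (q ^ h - 1)) ∧ (q - 1) / (q * (q ^ h - 1)) ≤ 1 / q ^ 2 ∧
    1 / q ≤ 2 * ((q ^ (h-1) - 1) / (q ^ h - 1)) := by
  obtain ⟨k, rfl⟩ : ∃ k, h = k + 2 := ⟨h - 2, by omega⟩
  have e1 : k + 2 - 1 = k + 1 := by omega
  rw [e1]
  have h1 : (1:ℝ) ≤ q ^ k := one_le_pow₀ (by linarith)
  have h2 : q ^ (k+2) = q ^ k * q ^ 2 := pow_add _ _ _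
  have h3 : q ^ (k+1) = q ^ k * q := pow_succ _ _
  have hq0 : 0 < q := by linarith
  have h4 : q ^ 2 ≤ q ^ k * q ^ 2 := le_mul_of_one_le_left (by positivity) h1
  have hd : 0 < q ^ (k+2) - 1 := by rw [h2]; nlinarith
  have E : 1 / q - (q ^ (k+1) - 1) / (q ^ (k+2) - 1) = (q - 1) / (q * (q ^ (k+2) - 1)) := by
    rw [div_sub_div _ _ hq0.ne' hd.ne']
    congr 1
    rw [h2, h3]; ring
  have B : (q - 1) / (q * (q ^ (k+2) - 1)) ≤ 1 / q ^ 2 := by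
    rw [div_le_div_iff₀ (by positivity) (by positivity), h2]
    nlinarith
  refine ⟨E, by apply div_nonneg; linarith; positivity, B, ?_⟩
  have : 1 / q ^ 2 ≤ 1 / q / 2 := by
    rw [div_div, div_le_div_iff₀ (by positivity) (by positivity)]; nlinarith
  linarith

lemma SY.alp_sub (H : SY N κ τ C) (h : ℕ) (hh : 2 ≤ h) (p : P) :
    1 / (N p : ℝ) - alp N h p = ((N p : ℝ) - 1) / ((N p : ℝ) * ((N p : ℝ) ^ h - 1)) :=
  (alp_core _ (H.N2 p) h hh).1

lemma SY.alp_le (H : SY N κ τ C) (h : ℕ) (hh : 2 ≤ h) (p : P) : alp N h p ≤ 1 / (N p : ℝ) := by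
  have := alp_core _ (H.N2 p) h hh
  unfold alp; linarith [this.1, this.2.1]

lemma SY.alp_ge (H : SY N κ τ C) (h : ℕ) (hh : 2 ≤ h) (p : P) : 1 / (N p : ℝ) ≤ 2 * alp N h p :=
  (alp_core _ (H.N2 p) h hh).2.2.2

lemma SY.alp_nn (H : SY N κ τ C) (h : ℕ) (hh : 2 ≤ h) (p : P) : 0 ≤ alp N h p := by
  have := H.alp_ge h hh p
  have : 0 ≤ 1 / (N p : ℝ) := by positivity
  linarith

lemma SY.alp_diff (H : SY N κ τ C) (h : ℕ) (hh : 2 ≤ h) (p : P) :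
    1 / (N p : ℝ) - alp N h p ≤ 1 / (N p : ℝ) ^ 2 := by
  have := alp_core _ (H.N2 p) h hh
  unfold alp; linarith [this.1, this.2.2.1]

lemma SY.sum_inv_sq (H : SY N κ τ C) : Summable (fun p => 1 / (N p : ℝ) ^ 2) := by
  refine (H.sumP 2 (by norm_num)).congr fun p => ?_
  have := H.N2 p
  rw [Real.rpow_neg (by linarith), one_div]
  norm_cast

def bN (N : P → ℕ) (h : ℕ) (n : ℕ) : ℝ := ∑ p ∈ (PM N n).filter (fun p => N p = n), alp N h p

lemma SY.sum_bN (H : SY N κ τ C) (h : ℕ) (x : ℝ) (g : ℕ → ℝ) :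
    ∑ p ∈ PM N x, alp N h p * g (N p) = ∑ k ∈ Finset.Icc 0 ⌊x⌋₊, bN N h k * g k := by
  rw [← Finset.sum_fiberwise_of_maps_to (s := PM N x) (t := Finset.Icc 0 ⌊x⌋₊) (g := N)]
  · apply Finset.sum_congr rfl
    intro k hk
    rw [Finset.mem_Icc] at hk
    have hx : (PM N x).filter (fun p => N p = k) = (PM N k).filter (fun p => N p = k) := by
      ext p
      rw [Finset.mem_filter, Finset.mem_filter, H.memPM, H.memPM]
      constructor
      · rintro ⟨_, rfl⟩; exact ⟨le_rfl, rfl⟩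
      · rintro ⟨_, rfl⟩
        refine ⟨?_, rfl⟩
        have h1 := H.hN p
        exact (Nat.le_floor_iff' (by omega)).1 hk.2
    rw [hx, bN, Finset.sum_mul]
    apply Finset.sum_congr rfl
    intro p hp; rw [(Finset.mem_filter.1 hp).2]
  · intro m hm
    rw [H.memPM] at hm
    rw [Finset.mem_Icc]
    exact ⟨Nat.zero_le _, Nat.le_floor hm⟩

lemma SY.PM_tendsto (H : SY N κ τ C) : Tendsto (PM N) atTop atTop := by
  apply tendsto_atTop_finset_of_monotone
  · intro x y hxy p hp
    rw [H.memPM] at *; linarith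
  · intro p; exact ⟨N p, H.memPM.2 le_rfl⟩

lemma SY.finsum_PM (H : SY N κ τ C) (x : ℝ) (f : P → ℝ) :
    ∑ᶠ p ∈ {p : P | (N p : ℝ) ≤ x}, f p = ∑ p ∈ PM N x, f p := by
  rw [finsum_mem_eq_finite_toFinset_sum _ (H.finP x)]
  apply Finset.sum_congr _ (fun _ _ => rfl)
  ext p; rw [H.memPM]; simp

lemma SY.diff_sum (H : SY N κ τ C) (h : ℕ) (hh : 2 ≤ h) : Summable (fun p => 1 / (N p : ℝ) - alp N h p) :=
  Summable.of_nonneg_of_le (fun p => sub_nonneg.2 (H.alp_le h hh p)) (fun p => H.alp_diff h hh p) H.sum_inv_sq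

lemma SY.BWb (H : SY N κ τ C) (h : ℕ) (hh : 2 ≤ h) (A : ℝ) (hA : IsMertens N A) :
    ∃ B, BW (bN N h) B (C1const N h A) := by
  obtain ⟨B, hB⟩ := H.mertens1
  refine ⟨B + ∑' p, Real.log (N p) / (N p : ℝ) ^ 2, ?_, ?_, ?_, ?_, ?_⟩
  · intro n; exact Finset.sum_nonneg fun p _ => H.alp_nn h hh p
  · unfold bN; rw [Finset.filter_false_of_mem, Finset.sum_empty]
    intro p _; have := H.hN p; omega
  · unfold bN; rw [Finset.filter_false_of_mem, Finset.sum_empty]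
    intro p _; have := H.hN p; omega
  · intro t ht
    rw [← H.sum_bN h t (fun k => Real.log k)]
    have e : ∑ p ∈ PM N t, alp N h p * Real.log (N p) - Real.log t =
        (∑ p ∈ PM N t, Real.log (N p) / N p - Real.log t) - ∑ p ∈ PM N t, (1 / (N p : ℝ) - alp N h p) * Real.log (N p) := by
      rw [sub_right_comm, ← Finset.sum_sub_distrib]
      congr 1
      apply Finset.sum_congr rfl
      intro p _; ring
    rw [e]
    have h1 : 0 ≤ ∑ p ∈ PM N t, (1 / (N p : ℝ) - alp N h p) * Real.log (N p) :=
      Finset.sum_nonneg fun p _ => mul_nonneg (sub_nonneg.2 (H.alp_le h hh p)) (H.log_nn p)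
    have h2 : ∑ p ∈ PM N t, (1 / (N p : ℝ) - alp N h p) * Real.log (N p) ≤ ∑' p, Real.log (N p) / (N p : ℝ) ^ 2 := by
      refine le_trans (Finset.sum_le_sum fun p _ => ?_)
        (H.log_sq_sum.sum_le_tsum _ fun p _ => div_nonneg (H.log_nn p) (by positivity))
      refine (mul_le_mul_of_nonneg_right (H.alp_diff h hh p) (H.log_nn p)).trans (le_of_eq (by ring))
    have h3 := abs_le.1 (hB t ht)
    rw [abs_le]; constructor <;> linarith [h3.1, h3.2]
  · have h1 : Tendsto (fun x => ∑ p ∈ PM N x, (1 / (N p : ℝ) - alp N h p)) atTop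
        (𝓝 (∑' p, (1 / (N p : ℝ) - alp N h p))) := (H.diff_sum h hh).hasSum.comp H.PM_tendsto
    have h2 := hA.sub h1
    have e : A - ∑' p, (1 / (N p : ℝ) - alp N h p) = C1const N h A := by
      unfold C1const
      simp only [H.alp_sub h hh]
    rw [e] at h2
    refine h2.congr fun x => ?_
    have h3 := H.sum_bN h x (fun _ => 1)
    simp only [mul_one] at h3
    rw [H.finsum_PM, ← h3, Finset.sum_sub_distrib]
    ring

end

section

variable {P : Type*} {N : P → ℕ} {κ τ C : ℝ}

lemma SY.omega_eq (H : SY N κ τ C) (x : ℝ) (m : P →₀ ℕ) (hm : m ∈ SM N x) :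
    (omegaM m : ℝ) = ∑ p ∈ PM N x, if 1 ≤ m p then (1:ℝ) else 0 := by
  rw [← Finset.sum_filter, Finset.sum_const, nsmul_eq_mul, mul_one]
  congr 1
  unfold omegaM
  congr 1
  ext p
  rw [Finsupp.mem_support_iff, Finset.mem_filter, H.memPM]
  constructor
  · intro h0
    have h1 : 1 ≤ m p := by omega
    refine ⟨?_, h1⟩
    have h2 := Nm_mono H.hN ((single_one_le p m).2 h1)
    rw [Nm_single, pow_one] at h2
    have h3 := H.memSM.1 hm
    have h4 : (N p : ℝ) ≤ Nm N m := by exact_mod_cast h2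
    linarith
  · rintro ⟨_, h⟩; omega

lemma SY.omega_sq (H : SY N κ τ C) (h : ℕ) (x : ℝ) :
    (∑ᶠ m ∈ {m : P →₀ ℕ | HFree h m ∧ (Nm N m : ℝ) ≤ x}, (omegaM m : ℝ) ^ 2) =
      ∑ p ∈ PM N x, cnt N (fun m => HFree h m ∧ 1 ≤ m p) x +
      ∑ p ∈ PM N x, ∑ q ∈ (PM N x).erase p, cnt N (fun m => HFree h m ∧ 1 ≤ m p ∧ 1 ≤ m q) x := by
  have hset : {m : P →₀ ℕ | HFree h m ∧ (Nm N m : ℝ) ≤ x} = ((SM N x).filter (HFree h) : Finset (P →₀ ℕ)) := by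
    ext m; simp [H.memSM, and_comm]
  rw [hset, finsum_mem_coe_finset]
  have e1 : ∀ R : (P →₀ ℕ) → Prop, cnt N (fun m => HFree h m ∧ R m) x =
      ∑ m ∈ (SM N x).filter (HFree h), if R m then (1:ℝ) else 0 := by
    intro R
    unfold cnt
    rw [Finset.sum_boole, Finset.filter_filter]
    congr!
  simp only [e1]
  rw [Finset.sum_comm, Finset.sum_congr rfl (fun p _ => Finset.sum_comm), Finset.sum_comm (s := PM N x),
    ← Finset.sum_add_distrib]
  apply Finset.sum_congr rfl
  intro m hm
  rw [H.omega_eq x m (Finset.mem_filter.1 hm).1, sq, Finset.sum_mul_sum, ← Finset.sum_add_distrib]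
  apply Finset.sum_congr rfl
  intro p hp
  rw [← Finset.add_sum_erase _ _ hp]
  congr 1
  · split_ifs <;> simp
  · apply Finset.sum_congr rfl
    intro q _
    by_cases h1 : 1 ≤ m p <;> by_cases h2 : 1 ≤ m q <;> simp [h1, h2]

lemma SY.cnt_pair_zero (H : SY N κ τ C) (h : ℕ) (x : ℝ) (p q : P) (hpq : p ≠ q)
    (hx : x / N p < N q) : cnt N (fun m => HFree h m ∧ 1 ≤ m p ∧ 1 ≤ m q) x = 0 := by
  unfold cnt
  refine Nat.cast_eq_zero.2 (Finset.card_eq_zero.2 (Finset.eq_empty_of_forall_notMem fun m hm0 => ?_))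
  simp only [Finset.mem_filter] at hm0
  obtain ⟨hm, _, h1, h2⟩ := hm0
  have hle : Finsupp.single p (1:ℕ) + Finsupp.single q (1:ℕ) ≤ m := by
    intro r
    rw [Finsupp.add_apply, Finsupp.single_apply, Finsupp.single_apply]
    split_ifs with a b b
    · exact absurd (a.trans b.symm) hpq
    · subst a; simpa using h1
    · subst b; simpa using h2
    · simp
  have h3 := Nm_mono H.hN hle
  rw [Nm_add, Nm_single, Nm_single, pow_one, pow_one] at h3
  have h4 : (N p : ℝ) * N q ≤ Nm N m := by exact_mod_cast h3
  have h5 := H.memSM.1 hm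
  have h6 := H.N2 p
  rw [div_lt_iff₀ (by linarith)] at hx
  nlinarith

lemma SY.pair_restrict (H : SY N κ τ C) (h : ℕ) (x : ℝ) (hx : 0 < x) :
    ∑ p ∈ PM N x, ∑ q ∈ (PM N x).erase p, cnt N (fun m => HFree h m ∧ 1 ≤ m p ∧ 1 ≤ m q) x =
    ∑ p ∈ PM N (x/2), ∑ q ∈ (PM N (x / N p)).erase p, cnt N (fun m => HFree h m ∧ 1 ≤ m p ∧ 1 ≤ m q) x := by
  have h1 : ∀ p ∈ PM N x, ∑ q ∈ (PM N x).erase p, cnt N (fun m => HFree h m ∧ 1 ≤ m p ∧ 1 ≤ m q) x =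
      ∑ q ∈ (PM N (x / N p)).erase p, cnt N (fun m => HFree h m ∧ 1 ≤ m p ∧ 1 ≤ m q) x := by
    intro p _
    symm
    apply Finset.sum_subset
    · apply Finset.erase_subset_erase
      intro q hq
      rw [H.memPM] at *
      exact hq.trans (div_le_self hx.le (by linarith [H.N2 p]))
    · intro q hq hq2
      rw [Finset.mem_erase] at hq
      have : q ∉ PM N (x / N p) := fun h0 => hq2 (Finset.mem_erase.2 ⟨hq.1, h0⟩)
      rw [H.memPM, not_le] at this
      exact H.cnt_pair_zero h x p q (Ne.symm hq.1) this
  rw [Finset.sum_congr rfl h1]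
  symm
  apply Finset.sum_subset
  · intro p hp; rw [H.memPM] at *; linarith
  · intro p _ hp
    rw [H.memPM, not_le] at hp
    apply Finset.sum_eq_zero
    intro q hq
    have h2 := H.memPM.1 (Finset.mem_of_mem_erase hq)
    have h3 := H.N2 p
    rw [le_div_iff₀ (by linarith)] at h2
    nlinarith [H.N2 q]

lemma SY.pow_bd (H : SY N κ τ C) (h : ℕ) (hh : 2 ≤ h) (p : P) :
    (N p : ℝ) ^ (-τ) ≤ 2 * (alp N h p * (N p : ℝ) ^ (1 - τ)) := by
  have h2 := H.N2 p
  have e : (N p : ℝ) ^ (-τ) = 1 / (N p : ℝ) * (N p : ℝ) ^ (1 - τ) := by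
    rw [show (-τ : ℝ) = -1 + (1 - τ) by ring, Real.rpow_add (by linarith), Real.rpow_neg_one, one_div]
  rw [e, ← mul_assoc]
  exact mul_le_mul_of_nonneg_right (H.alp_ge h hh p) (by positivity)

lemma SY.err1 (H : SY N κ τ C) (h : ℕ) (hh : 2 ≤ h) (x : ℝ) (hx : 0 < x) :
    ∑ p ∈ PM N x, (x / N p) ^ τ ≤ 2 * x ^ τ * ∑ n ∈ Finset.Icc 0 ⌊x⌋₊, bN N h n * (n:ℝ) ^ (1 - τ) := by
  rw [← H.sum_bN h x (fun n => (n:ℝ) ^ (1 - τ)), Finset.mul_sum]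
  apply Finset.sum_le_sum
  intro p _
  have h2 := H.N2 p
  rw [Real.div_rpow hx.le (by linarith), div_eq_mul_inv, ← Real.rpow_neg (by linarith)]
  have := mul_le_mul_of_nonneg_left (H.pow_bd h hh p) (by positivity : 0 ≤ x ^ τ)
  linarith

lemma SY.err2 (H : SY N κ τ C) (h : ℕ) (hh : 2 ≤ h) (x : ℝ) (hx : 0 < x) :
    ∑ p ∈ PM N (x/2), ∑ q ∈ (PM N (x / N p)).erase p, (x / (N p * N q)) ^ τ ≤
    4 * x ^ τ * ∑ n ∈ Finset.Icc 0 ⌊x/2⌋₊, bN N h n * (n:ℝ) ^ (1 - τ) *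
      ∑ m ∈ Finset.Icc 0 ⌊x/n⌋₊, bN N h m * (m:ℝ) ^ (1 - τ) := by
  have e := H.sum_bN h (x/2) (fun n => (n:ℝ) ^ (1 - τ) * ∑ m ∈ Finset.Icc 0 ⌊x/n⌋₊, bN N h m * (m:ℝ) ^ (1 - τ))
  simp only [← mul_assoc] at e
  rw [← e, Finset.mul_sum]
  apply Finset.sum_le_sum
  intro p _
  rw [← H.sum_bN h (x / N p) (fun n => (n:ℝ) ^ (1 - τ)), Finset.mul_sum, Finset.mul_sum]
  refine (Finset.sum_le_sum_of_subset_of_nonneg (Finset.erase_subset _ _) (fun q _ _ => by positivity)).trans ?_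
  apply Finset.sum_le_sum
  intro q _
  have h2 := H.N2 p
  have h3 := H.N2 q
  rw [Real.div_rpow hx.le (by positivity), div_eq_mul_inv, ← Real.rpow_neg (by positivity),
    Real.mul_rpow (by linarith) (by linarith)]
  have h4 : (N p : ℝ) ^ (-τ) * (N q : ℝ) ^ (-τ) ≤
    (2 * (alp N h p * (N p : ℝ) ^ (1 - τ))) * (2 * (alp N h q * (N q : ℝ) ^ (1 - τ))) :=
    mul_le_mul (H.pow_bd h hh p) (H.pow_bd h hh q) (by positivity)
      (le_trans (by positivity) (H.pow_bd h hh p))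
  have := mul_le_mul_of_nonneg_left h4 (by positivity : 0 ≤ x ^ τ)
  linarith

lemma SY.main_pair (H : SY N κ τ C) (h : ℕ) (x : ℝ) (hx : 4 ≤ x) :
    ∑ p ∈ PM N (x/2), ∑ q ∈ (PM N (x / N p)).erase p, alp N h p * alp N h q =
    ∑ n ∈ Finset.Icc 0 ⌊x/2⌋₊, bN N h n * ∑ m ∈ Finset.Icc 0 ⌊x/n⌋₊, bN N h m -
    ∑ p ∈ (PM N (x/2)).filter (fun p => (N p : ℝ) ^ 2 ≤ x), alp N h p ^ 2 := by
  rw [← H.sum_bN h (x/2) (fun n => ∑ m ∈ Finset.Icc 0 ⌊x/n⌋₊, bN N h m), Finset.sum_filter,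
    ← Finset.sum_sub_distrib]
  apply Finset.sum_congr rfl
  intro p _
  have e := H.sum_bN h (x / N p) (fun _ => 1)
  simp only [mul_one] at e
  rw [← e, ← Finset.mul_sum]
  have h2 := H.N2 p
  have hi : p ∈ PM N (x / N p) ↔ (N p : ℝ) ^ 2 ≤ x := by
    rw [H.memPM, le_div_iff₀ (by linarith), sq]
  split_ifs with h0
  · rw [← Finset.add_sum_erase _ _ (hi.2 h0)]; ring
  · rw [Finset.erase_eq_of_notMem (fun h1 => h0 (hi.1 h1))]; ring

lemma SY.alp_sq_le (H : SY N κ τ C) (h : ℕ) (hh : 2 ≤ h) (p : P) : alp N h p ^ 2 ≤ 1 / (N p : ℝ) ^ 2 := by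
  have := pow_le_pow_left₀ (H.alp_nn h hh p) (H.alp_le h hh p) 2
  rwa [div_pow, one_pow] at this

lemma SY.tail_sq (H : SY N κ τ C) (h : ℕ) (hh : 2 ≤ h) (x : ℝ) (hx : 4 ≤ x) :
    |∑ p ∈ (PM N (x/2)).filter (fun p => (N p : ℝ) ^ 2 ≤ x), alp N h p ^ 2 - ∑' p, alp N h p ^ 2| ≤
      x ^ (-(1/4) : ℝ) * ∑' p, (N p : ℝ) ^ (-(3/2) : ℝ) := by
  set F := (PM N (x/2)).filter (fun p => (N p : ℝ) ^ 2 ≤ x) with hF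
  have hs : Summable (fun p => alp N h p ^ 2) :=
    Summable.of_nonneg_of_le (fun p => sq_nonneg _) (fun p => H.alp_sq_le h hh p) H.sum_inv_sq
  have h1 : ∑ p ∈ F, alp N h p ^ 2 = ∑' p, if p ∈ F then alp N h p ^ 2 else 0 := by
    rw [tsum_eq_sum (s := F)]
    · exact Finset.sum_congr rfl fun p hp => by rw [if_pos hp]
    · intro p hp; rw [if_neg hp]
  have hs1 : Summable (fun p => if p ∈ F then alp N h p ^ 2 else 0) :=
    summable_of_ne_finset_zero (s := F) (fun p hp => by rw [if_neg hp])
  rw [abs_sub_comm, h1, ← hs.tsum_sub hs1, ← tsum_mul_left, ← Real.norm_eq_abs]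
  apply tsum_of_norm_bounded ((H.sumP (3/2) (by norm_num)).mul_left _).hasSum
  intro p
  have h2 := H.N2 p
  by_cases hp : p ∈ F
  · rw [if_pos hp, sub_self, norm_zero]; positivity
  · rw [if_neg hp, sub_zero, Real.norm_eq_abs, abs_of_nonneg (sq_nonneg _)]
    have hlt : x < (N p : ℝ) ^ 2 := by
      by_contra hle
      rw [not_lt] at hle
      apply hp
      rw [hF, Finset.mem_filter, H.memPM]
      exact ⟨by nlinarith, hle⟩
    refine (H.alp_sq_le h hh p).trans ?_
    have e : 1 / (N p : ℝ) ^ 2 = ((N p : ℝ) ^ 2) ^ (-(1/4) : ℝ) * (N p : ℝ) ^ (-(3/2) : ℝ) := by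
      rw [← Real.rpow_natCast, ← Real.rpow_mul (by linarith), ← Real.rpow_add (by linarith), one_div,
        ← Real.rpow_neg (by linarith)]
      norm_num
    rw [e]
    apply mul_le_mul_of_nonneg_right _ (by positivity)
    exact Real.rpow_le_rpow_of_nonpos (by linarith) hlt.le (by norm_num)

lemma rpow_quarter (x : ℝ) (hx : 1 ≤ x) (hl : 0 < Real.log x) : x ^ (-(1/4) : ℝ) ≤ 4 / Real.log x := by
  have h1 := Real.log_le_rpow_div (by linarith : 0 ≤ x) (by norm_num : (0:ℝ) < 1/4)
  rw [Real.rpow_neg (by linarith), ← one_div, div_le_div_iff₀ (by positivity) hl]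
  linarith

theorem SY.final (H : SY N κ τ C) (A : ℝ) (hA : IsMertens N A) (h : ℕ) (hh : 2 ≤ h) :
    ∃ K, ∀ x : ℝ, 4 ≤ x → 1 ≤ Real.log (Real.log x) → 1 ≤ Real.log x →
    |(∑ᶠ m ∈ {m : P →₀ ℕ | HFree h m ∧ (Nm N m : ℝ) ≤ x}, (omegaM m : ℝ) ^ 2)
        - κ / zetaM N h * (x * Real.log (Real.log x) ^ 2)
        - κ * (2 * C1const N h A + 1) / zetaM N h * (x * Real.log (Real.log x))
        - κ * C2const N h A / zetaM N h * x| ≤ K * (x * Real.log (Real.log x) / Real.log x) := by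
  obtain ⟨B, hB⟩ := H.BWb h hh A hA
  obtain ⟨D, hD0, hD1, hD2⟩ := H.D_count h hh
  have hσ : 0 < 1 - τ := by linarith [H.τ2]
  obtain ⟨K3, hK3, h3⟩ := hB.iii (1 - τ) hσ
  obtain ⟨K4, hK4, h4⟩ := hB.iv (1 - τ) hσ
  obtain ⟨K5, hK5, h5⟩ := hB.pair
  have hBn := hB.C_nonneg
  set c := κ / zetaM N h with hc
  set C1 := C1const N h A with hC1
  set Z := ∑' p, (N p : ℝ) ^ (-(3/2) : ℝ) with hZ
  have hZ0 : 0 ≤ Z := tsum_nonneg fun p => by positivity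
  refine ⟨2 * D * K3 + 4 * D * K4 + |c| * (2 * B + K5 + 4 * Z), ?_⟩
  intro x hx hLL hL
  have hx0 : 0 < x := by linarith
  set LL := Real.log (Real.log x) with hLLd
  set L := Real.log x with hLd
  set S1 := ∑ p ∈ PM N x, cnt N (fun m => HFree h m ∧ 1 ≤ m p) x with hS1
  set S2 := ∑ p ∈ PM N (x/2), ∑ q ∈ (PM N (x / N p)).erase p, cnt N (fun m => HFree h m ∧ 1 ≤ m p ∧ 1 ≤ m q) x with hS2
  set a1 := ∑ n ∈ Finset.Icc 0 ⌊x⌋₊, bN N h n with ha1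
  set a2 := ∑ n ∈ Finset.Icc 0 ⌊x/2⌋₊, bN N h n * ∑ m ∈ Finset.Icc 0 ⌊x/n⌋₊, bN N h m with ha2
  set a3 := ∑ p ∈ (PM N (x/2)).filter (fun p => (N p : ℝ) ^ 2 ≤ x), alp N h p ^ 2 with ha3
  set a4 := ∑' p, alp N h p ^ 2 with ha4
  set E := x * LL / L with hE
  have hxx : x ^ τ * x ^ (1 - τ) = x := by
    rw [← Real.rpow_add hx0]; simp
  have hEL : x / L ≤ E := by
    rw [hE]; apply div_le_div_of_nonneg_right _ (by linarith); nlinarith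
  have hE0 : 0 ≤ E := by positivity
  have b1 : |S1 - c * x * a1| ≤ 2 * D * K3 * E := by
    have e : a1 = ∑ p ∈ PM N x, alp N h p := by
      have e := H.sum_bN h x (fun _ => 1)
      simp only [mul_one] at e
      rw [e]
    rw [e, hS1, Finset.mul_sum, ← Finset.sum_sub_distrib]
    refine (Finset.abs_sum_le_sum_abs _ _).trans ?_
    have : ∀ p ∈ PM N x, |cnt N (fun m => HFree h m ∧ 1 ≤ m p) x - c * x * alp N h p| ≤ D * (x / N p) ^ τ := by
      intro p _
      have := hD1 p x hx0
      rwa [mul_right_comm] at this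
    refine (Finset.sum_le_sum this).trans ?_
    rw [← Finset.mul_sum]
    have u1 := H.err1 h hh x hx0
    have u2 := mul_le_mul_of_nonneg_left (h3 x (by linarith)) (by positivity : 0 ≤ 2 * x ^ τ)
    have u3 : 2 * x ^ τ * (K3 * (x ^ (1 - τ) / L)) = 2 * K3 * (x / L) := by
      calc _ = 2 * K3 * ((x ^ τ * x ^ (1 - τ)) / L) := by ring
        _ = _ := by rw [hxx]
    rw [u3] at u2
    have u4 := mul_le_mul_of_nonneg_left hEL (by positivity : 0 ≤ 2 * K3)
    have u5 := mul_le_mul_of_nonneg_left (u1.trans (u2.trans u4)) hD0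
    linarith
  have b2 : |S2 - c * x * (a2 - a3)| ≤ 4 * D * K4 * E := by
    rw [← H.main_pair h x hx, hS2, Finset.mul_sum, ← Finset.sum_sub_distrib]
    refine (Finset.abs_sum_le_sum_abs _ _).trans ?_
    have : ∀ p ∈ PM N (x/2), |∑ q ∈ (PM N (x / N p)).erase p, cnt N (fun m => HFree h m ∧ 1 ≤ m p ∧ 1 ≤ m q) x
        - c * x * ∑ q ∈ (PM N (x / N p)).erase p, alp N h p * alp N h q| ≤
        D * ∑ q ∈ (PM N (x / N p)).erase p, (x / (N p * N q)) ^ τ := by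
      intro p _
      rw [Finset.mul_sum, Finset.mul_sum, ← Finset.sum_sub_distrib]
      refine (Finset.abs_sum_le_sum_abs _ _).trans ?_
      apply Finset.sum_le_sum
      intro q hq
      have := hD2 p q (Ne.symm (Finset.mem_erase.1 hq).1) x hx0
      rwa [mul_right_comm] at this
    refine (Finset.sum_le_sum this).trans ?_
    rw [← Finset.mul_sum]
    have u1 := H.err2 h hh x hx0
    have u2 := mul_le_mul_of_nonneg_left (h4 x hx hLL hL) (by positivity : 0 ≤ 4 * x ^ τ)
    have u3 : 4 * x ^ τ * (K4 * (x ^ (1 - τ) * LL / L)) = 4 * K4 * E := by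
      calc _ = 4 * K4 * ((x ^ τ * x ^ (1 - τ)) * LL / L) := by ring
        _ = _ := by rw [hxx]
    rw [u3] at u2
    have u5 := mul_le_mul_of_nonneg_left (u1.trans u2) hD0
    linarith
  have b3 : |a1 - LL - C1| ≤ 2 * B / L := hB.mertens2 x (by linarith)
  have b4 : |a2 - ((LL + C1) ^ 2 - Real.pi ^ 2 / 6)| ≤ K5 * LL / L := h5 x hx hLL hL
  have b5 : |a3 - a4| ≤ 4 / L * Z :=
    (H.tail_sq h hh x hx).trans (mul_le_mul_of_nonneg_right (rpow_quarter x (by linarith) (by linarith)) hZ0)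
  have hC2 : C2const N h A = C1 ^ 2 + C1 - Real.pi ^ 2 / 6 - a4 := by
    unfold C2const Bconst
    rw [ha4, hC1]; unfold alp; ring
  rw [H.omega_sq h x, H.pair_restrict h x hx0, hC2]
  have key : S1 + S2 - c * (x * LL ^ 2) - κ * (2 * C1 + 1) / zetaM N h * (x * LL)
      - κ * (C1 ^ 2 + C1 - Real.pi ^ 2 / 6 - a4) / zetaM N h * x =
      (S1 - c * x * a1) + (S2 - c * x * (a2 - a3)) +
      c * x * ((a1 - LL - C1) + (a2 - ((LL + C1) ^ 2 - Real.pi ^ 2 / 6)) - (a3 - a4)) := by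
    rw [hc]; ring
  rw [key]
  have b6 : |(a1 - LL - C1) + (a2 - ((LL + C1) ^ 2 - Real.pi ^ 2 / 6)) - (a3 - a4)| ≤
      2 * B / L + K5 * LL / L + 4 / L * Z :=
    (abs_sub _ _).trans (add_le_add ((abs_add_le _ _).trans (add_le_add b3 b4)) b5)
  have b7 : x * (2 * B / L + K5 * LL / L + 4 / L * Z) ≤ (2 * B + K5 + 4 * Z) * E := by
    have e : x * (2 * B / L + K5 * LL / L + 4 / L * Z) = (2 * B + 4 * Z) * (x / L) + K5 * E := by
      rw [hE]; ring
    rw [e]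
    have := mul_le_mul_of_nonneg_left hEL (by positivity : 0 ≤ 2 * B + 4 * Z)
    linarith
  have b8 : |c * x * ((a1 - LL - C1) + (a2 - ((LL + C1) ^ 2 - Real.pi ^ 2 / 6)) - (a3 - a4))| ≤
      |c| * ((2 * B + K5 + 4 * Z) * E) := by
    rw [abs_mul, abs_mul, abs_of_pos hx0, mul_assoc]
    exact mul_le_mul_of_nonneg_left ((mul_le_mul_of_nonneg_left b6 hx0.le).trans b7) (abs_nonneg _)
  refine (abs_add_le _ _).trans ?_
  refine (add_le_add ((abs_add_le _ _).trans (add_le_add b1 b2)) b8).trans (le_of_eq (by ring))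

end

/-- Second moment of `ω` over `h`-free elements. -/
theorem second_moment_omega_hfree {P : Type*} [Countable P] (N : P → ℕ)
    (hN : ∀ p, 2 ≤ N p) (κ θ : ℝ) (hstar : StarCond N κ θ)
    (A : ℝ) (hA : IsMertens N A) (h : ℕ) (hh : 2 ≤ h) :
    (fun x : ℝ =>
        (∑ᶠ m ∈ {m : P →₀ ℕ | HFree h m ∧ (Nm N m : ℝ) ≤ x}, (omegaM m : ℝ) ^ 2)
          - κ / zetaM N h * (x * Real.log (Real.log x) ^ 2)
          - κ * (2 * C1const N h A + 1) / zetaM N h * (x * Real.log (Real.log x))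
          - κ * C2const N h A / zetaM N h * x)
      =O[atTop] fun x : ℝ => x * Real.log (Real.log x) / Real.log x := by
  obtain ⟨τ, C, H⟩ := StarCond.SY hN hstar
  obtain ⟨K, hK⟩ := H.final A hA h hh
  apply IsBigO.of_bound K
  filter_upwards [eventually_ge_atTop 4, Real.tendsto_log_atTop.eventually_ge_atTop 1,
    (Real.tendsto_log_atTop.comp Real.tendsto_log_atTop).eventually_ge_atTop 1] with x h1 h2 h3
  have h4 : 1 ≤ Real.log (Real.log x) := h3
  have h5 : 0 ≤ x * Real.log (Real.log x) / Real.log x := by positivity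
  rw [Real.norm_eq_abs, Real.norm_eq_abs, abs_of_nonneg h5]
  exact hK x h1 h4 h2
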